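/- arXiv:1606.00172 — 2 statements merged into one kernel-verified Lean document; each statement's English description precedes it below -/
import Mathlib

section
/- Let p ∈ (1,2). For a > 0 let ψ(·,a) be the function associated with the unique solution f(·,a) of (|f'|^{p-2} f')' + f - |f'|^{p-1} = 0, f(0) = a, f'(0) = 0, via ψ(1-f(r,a)/a, a) = |f'(r,a)|^p/a^p, and let ℓ(a) := lim_{y→1} ψ(y,a). Then there exists a^* > 0 such that the set 𝒜 := { a > 0 : ℓ(a) > 0 } equals the open interval (a^*, ∞); in particular 𝒜 is nonempty and open. -/
/-!
Before extinction the flux `g = |f'|^{p-2} f'` is negative, because `(-g)' = f - |g|` with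
`f > 0` and `g(0) = 0`; hence `f` is strictly decreasing, and it attains every level in `(0,a)`.
Inverting `r ↦ 1 - f(r)/a` gives, with `k = p/(p-1)`, `θ = 1/k` and `A = a^{2-p}`,
`ψ' = k (A (1-y) - ψ^θ)` on `(0,1)` and `ψ(0+) = 0` (`PsiRel.hasDerivAt`, `PsiRel.tendsto_zero`).

The right-hand side is increasing in `A` and decreasing in `ψ`, so a comparison principle
(`nonpos_of_deriv_nonpos`) yields everything:

* `ℓ` is nondecreasing in `a` (`IsPhase.mono`), so the set of positive limits is upward closed;
* `0 ≤ ℓ(b) - ℓ(a) ≤ k (b^{2-p} - a^{2-p})` for `a ≤ b` (`IsPhase.sub_le`), so it is open;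
* for large `a`, `ℓ(a) ≥ k (A/2 - (kA)^θ) > 0` (`IsPhase.lower`), so it is nonempty;
* for small `a`, the supersolution `(2A(1-y))^k` forces `ℓ(a) = 0` (`IsPhase.upper`), so its
  infimum is positive.

A nonempty, open, upward closed set of reals with positive infimum `a^*` is `(a^*, ∞)`.
-/

open Set Filter Topology

/-- The extinction "radius" `R = inf{r > 0 : f(r) = 0}`, as an extended real number
(`⊤` when `f` does not vanish on `(0,∞)`). -/
noncomputable def extTime (f : ℝ → ℝ) : EReal :=
  sInf {x : EReal | ∃ r : ℝ, 0 < r ∧ f r = 0 ∧ x = (r : EReal)}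

/-- `f` solves `(|f'|^{p-2} f')' + f - |f'|^{p-1} = 0` on `(0,∞)` with `f(0)=a`, `f'(0)=0`;
`fd` is the derivative of `f` and `gd` the derivative of `|f'|^{p-2} f'`, both continuous
on `[0,∞)`, so that `f ∈ C¹([0,∞))` and `|f'|^{p-2} f' ∈ C¹([0,∞))`. -/
def IsSol (p a : ℝ) (f fd gd : ℝ → ℝ) : Prop :=
  (∀ r ∈ Set.Ici (0:ℝ), HasDerivWithinAt f (fd r) (Set.Ici 0) r) ∧
  ContinuousOn fd (Set.Ici 0) ∧
  (∀ r ∈ Set.Ici (0:ℝ), HasDerivWithinAt (fun s => |fd s| ^ (p-2) * fd s) (gd r) (Set.Ici 0) r) ∧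
  ContinuousOn gd (Set.Ici 0) ∧
  (∀ r ∈ Set.Ioi (0:ℝ), gd r + f r - |fd r| ^ (p-1) = 0) ∧
  f 0 = a ∧ fd 0 = 0

/-- `ψ` is the function associated with `f = f(·,a)` via `ψ(1 - f(r)/a) = |f'(r)|^p/a^p`
for `r ∈ [0,R(a))`. -/
def PsiRel (p a : ℝ) (f fd ψ : ℝ → ℝ) : Prop :=
  ∀ r : ℝ, 0 ≤ r → (r : EReal) < extTime f → ψ (1 - f r / a) = |fd r| ^ p / a ^ p

/-! ### A comparison principle -/

/-- One-dimensional comparison principle on `(0,1)`: a function that starts from a nonpositive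
value and does not increase where it is positive stays nonpositive. -/
lemma nonpos_of_deriv_nonpos {D D' : ℝ → ℝ} {d : ℝ} (hd : d ≤ 0)
    (h0 : Tendsto D (𝓝[>] 0) (𝓝 d))
    (hD : ∀ y ∈ Ioo (0:ℝ) 1, HasDerivAt D (D' y) y)
    (hneg : ∀ y ∈ Ioo (0:ℝ) 1, 0 < D y → D' y ≤ 0) :
    ∀ y ∈ Ioo (0:ℝ) 1, D y ≤ 0 := by
  intro y hy
  apply le_of_forall_pos_le_add
  intro ε hε
  have hev : ∀ᶠ x in 𝓝[>] (0:ℝ), D x < ε / 2 := h0.eventually_lt_const (by linarith)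
  have hev2 : ∀ᶠ x in 𝓝[>] (0:ℝ), x ∈ Ioo 0 y := Ioo_mem_nhdsGT hy.1
  obtain ⟨x, hx1, hx2, hx3⟩ := (hev.and hev2).exists
  have hsub : ∀ z ∈ Icc x y, z ∈ Ioo (0:ℝ) 1 :=
    fun z hz => ⟨hx2.trans_le hz.1, hz.2.trans_lt hy.2⟩
  -- the slightly tilted barrier turns the weak inequality on `D'` into a strict one
  have key := image_le_of_deriv_right_lt_deriv_boundary' (f := D) (f' := D') (a := x) (b := y)
    (B := fun t => ε / 2 + ε / 2 * t) (B' := fun _ => ε / 2)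
    (fun z hz => (hD z (hsub z hz)).continuousAt.continuousWithinAt)
    (fun z hz => (hD z (hsub z ⟨hz.1, hz.2.le⟩)).hasDerivWithinAt)
    (by
      have : 0 < ε / 2 * x := by positivity
      linarith)
    (by fun_prop)
    (fun z _ => by
      have := ((hasDerivAt_id z).const_mul (ε / 2)).const_add (ε / 2)
      simpa using this.hasDerivWithinAt)
    (fun z hz hzD => by
      have hz' := hsub z ⟨hz.1, hz.2.le⟩
      have hpos : 0 < D z := by
        rw [hzD]
        have : 0 < ε / 2 * z := mul_pos (by linarith) hz'.1
        linarith
      have := hneg z hz' hpos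
      linarith)
    (right_mem_Icc.2 hx3.le)
  have h2 : ε / 2 * y ≤ ε / 2 * 1 := mul_le_mul_of_nonneg_left hy.2.le (by linarith)
  linarith

/-! ### The solution before extinction -/

/-- The flux satisfies `||s|^{p-2} s| = |s|^{p-1}`, including the junk case `s = 0`. -/
lemma abs_flux {p : ℝ} (hp : 1 < p) (s : ℝ) : |(|s| ^ (p - 2) * s)| = |s| ^ (p - 1) := by
  rcases eq_or_ne s 0 with rfl | hs
  · simp [Real.zero_rpow (by linarith : p - 1 ≠ 0)]
  · have : 0 < |s| := abs_pos.2 hs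
    rw [abs_mul, abs_of_pos (Real.rpow_pos_of_pos this _)]
    nth_rewrite 2 [← Real.rpow_one |s|]
    rw [← Real.rpow_add this]
    congr 1
    ring

section Sol

variable {p a : ℝ} {f fd gd ψ : ℝ → ℝ}

lemma IsSol.gd_eq (hp : 1 < p) (h : IsSol p a f fd gd) {r : ℝ} (hr : 0 ≤ r) :
    gd r = |(|fd r| ^ (p - 2) * fd r)| - f r := by
  obtain ⟨h1, h2, h3, h4, h5, h6, h7⟩ := h
  have hfc : ContinuousOn f (Ici 0) := fun r hr => (h1 r hr).continuousWithinAt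
  have hgc : ContinuousOn (fun s => |fd s| ^ (p - 2) * fd s) (Ici 0) :=
    fun r hr => (h3 r hr).continuousWithinAt
  have : EqOn gd (fun r => |(|fd r| ^ (p - 2) * fd r)| - f r) (Ioi 0) := by
    intro r hr
    have := h5 r hr
    simp only [abs_flux hp]
    linarith
  exact this.of_subset_closure h4 (hgc.abs.sub hfc) Ioi_subset_Ici_self (by simp) hr

/-- As long as `f` stays positive, the flux is negative: `-g` solves `(-g)' = f - |g|`, so it
cannot cross zero downwards, and `e^r (-g)` is then strictly increasing. -/
lemma IsSol.flux_neg (hp : 1 < p) (h : IsSol p a f fd gd) {r : ℝ} (hr : 0 < r)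
    (hpos : ∀ s ∈ Icc 0 r, 0 < f s) : |fd r| ^ (p - 2) * fd r < 0 := by
  have hgd := fun s hs => IsSol.gd_eq hp h (r := s) hs
  obtain ⟨h1, h2, h3, h4, h5, h6, h7⟩ := h
  set g : ℝ → ℝ := fun s => |fd s| ^ (p - 2) * fd s with hg
  have hgc : ContinuousOn g (Ici 0) := fun r hr => (h3 r hr).continuousWithinAt
  have hg0 : g 0 = 0 := by simp [hg, h7]
  have hle : ∀ s ∈ Icc 0 r, g s ≤ 0 := by
    intro s hs
    refine image_le_of_deriv_right_lt_deriv_boundary' (f := g) (f' := gd) (a := 0) (b := r)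
      (B := fun _ => 0) (B' := fun _ => 0) (hgc.mono Icc_subset_Ici_self)
      (fun z hz => (h3 z hz.1).mono (Ici_subset_Ici.2 hz.1)) hg0.le continuousOn_const
      (fun z _ => hasDerivWithinAt_const _ _ _) (fun z hz hz0 => ?_) hs
    have := hgd z hz.1
    change gd z = |g z| - f z at this
    rw [this, hz0, abs_zero]
    linarith [hpos z ⟨hz.1, hz.2.le⟩]
  have hanti : StrictAntiOn (fun s => Real.exp s * g s) (Icc 0 r) := by
    apply strictAntiOn_of_deriv_neg (convex_Icc 0 r)
    · exact Real.continuous_exp.continuousOn.mul (hgc.mono Icc_subset_Ici_self)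
    · intro z hz
      rw [interior_Icc] at hz
      have hz' : z ∈ Icc 0 r := Ioo_subset_Icc_self hz
      have hd : HasDerivAt g (gd z) z := (h3 z hz.1.le).hasDerivAt (Ici_mem_nhds hz.1)
      have hprod : HasDerivAt (fun s => Real.exp s * g s) (Real.exp z * g z + Real.exp z * gd z) z :=
        (Real.hasDerivAt_exp z).mul hd
      rw [hprod.deriv]
      have e1 : gd z = |g z| - f z := hgd z hz.1.le
      rw [abs_of_nonpos (hle z hz')] at e1
      have e2 : Real.exp z * g z + Real.exp z * gd z = - (Real.exp z * f z) := by rw [e1]; ring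
      rw [e2]
      have := mul_pos (Real.exp_pos z) (hpos z hz')
      linarith
  have := hanti (left_mem_Icc.2 hr.le) (right_mem_Icc.2 hr.le) hr
  simp only [hg0, mul_zero] at this
  exact (pos_iff_neg_of_mul_neg this).1 (Real.exp_pos r)

lemma IsSol.fd_neg (hp : 1 < p) (h : IsSol p a f fd gd) {r : ℝ} (hr : 0 < r)
    (hpos : ∀ s ∈ Icc 0 r, 0 < f s) : fd r < 0 := by
  have := IsSol.flux_neg hp h hr hpos
  by_contra hcon
  have : 0 ≤ |fd r| ^ (p - 2) * fd r := mul_nonneg (by positivity) (not_lt.1 hcon)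
  linarith

/-- `f` cannot stay above a positive level: the flux would then be bounded away from zero, and
`f` would decrease at least linearly. -/
lemma IsSol.exists_le (hp : 1 < p) (h : IsSol p a f fd gd) {v : ℝ} (hv : 0 < v) :
    ∃ r, 0 ≤ r ∧ f r ≤ v := by
  by_contra! hcon
  have hflux : ∀ r, 0 < r → |fd r| ^ (p - 2) * fd r < 0 := fun r hr =>
    IsSol.flux_neg hp h hr (fun s hs => hv.trans (hcon s hs.1))
  have hgd := fun s hs => IsSol.gd_eq hp h (r := s) hs
  have hfd : ∀ r, 0 < r → fd r < 0 := fun r hr =>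
    IsSol.fd_neg hp h hr (fun s hs => hv.trans (hcon s hs.1))
  obtain ⟨h1, h2, h3, h4, h5, h6, h7⟩ := h
  set g : ℝ → ℝ := fun s => |fd s| ^ (p - 2) * fd s with hg
  have hgc : ContinuousOn g (Ici 0) := fun r hr => (h3 r hr).continuousWithinAt
  have hg1 : g 1 < 0 := hflux 1 one_pos
  set c := min (-g 1) v with hc
  have hcpos : 0 < c := lt_min (by linarith) hv
  have hgle : ∀ s, 1 ≤ s → g s ≤ -c := by
    intro s hs
    refine image_le_of_deriv_right_lt_deriv_boundary' (f := g) (f' := gd) (a := 1) (b := s)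
      (B := fun _ => -c) (B' := fun _ => 0)
      (hgc.mono (fun z hz => (zero_le_one.trans hz.1 : (0:ℝ) ≤ z)))
      (fun z hz => (h3 z (zero_le_one.trans hz.1 : (0:ℝ) ≤ z)).mono
        (Ici_subset_Ici.2 (zero_le_one.trans hz.1)))
      (by linarith [min_le_left (-g 1) v]) continuousOn_const
      (fun z _ => hasDerivWithinAt_const _ _ _) (fun z hz hz0 => ?_) (right_mem_Icc.2 hs)
    have hz1 : (0:ℝ) ≤ z := zero_le_one.trans hz.1
    have e : gd z = |g z| - f z := hgd z hz1
    rw [e, hz0, abs_neg, abs_of_pos hcpos]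
    linarith [hcon z hz1, min_le_right (-g 1) v]
  set e := c ^ (1 / (p - 1)) with he
  have hepos : 0 < e := Real.rpow_pos_of_pos hcpos _
  have hfdle : ∀ s, 1 ≤ s → fd s ≤ -e := by
    intro s hs
    have h0 : fd s < 0 := hfd s (by linarith)
    have h1 : c ≤ |fd s| ^ (p - 1) := by
      rw [← abs_flux hp]
      have := hgle s hs
      change c ≤ |g s|
      rw [abs_of_neg (by linarith)]
      linarith
    have h2 : e ≤ |fd s| := by
      rw [he, one_div]
      exact (Real.rpow_inv_le_iff_of_pos hcpos.le (abs_nonneg _) (by linarith)).2 h1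
    rw [abs_of_neg h0] at h2
    linarith
  have hlin : ∀ s, 1 ≤ s → f s ≤ f 1 - e * (s - 1) := by
    intro s hs
    refine image_le_of_deriv_right_le_deriv_boundary (f := f) (f' := fd) (a := 1) (b := s)
      (B := fun t => f 1 - e * (t - 1)) (B' := fun _ => -e)
      (fun z hz => ((h1 z (zero_le_one.trans hz.1 : (0:ℝ) ≤ z)).continuousWithinAt).mono
        (fun z hz => (zero_le_one.trans hz.1 : (0:ℝ) ≤ z)))
      (fun z hz => (h1 z (zero_le_one.trans hz.1 : (0:ℝ) ≤ z)).mono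
        (Ici_subset_Ici.2 (zero_le_one.trans hz.1)))
      (by simp) (by fun_prop)
      (fun z _ => ?_) (fun z hz => hfdle z hz.1) (right_mem_Icc.2 hs)
    have := (((hasDerivAt_id z).sub_const 1).const_mul e).const_sub (f 1)
    simpa using this.hasDerivWithinAt
  have hf1 : 0 < f 1 := hv.trans (hcon 1 zero_le_one)
  have hs : 1 ≤ 1 + f 1 / e := by
    have : 0 < f 1 / e := by positivity
    linarith
  have := hlin _ hs
  have e3 : e * (1 + f 1 / e - 1) = f 1 := by field_simp; ring
  rw [e3] at this
  linarith [hcon (1 + f 1 / e) (by linarith)]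

/-- Every level in `(0,a)` is attained before extinction. -/
lemma IsSol.exists_eq (hp : 1 < p) (h : IsSol p a f fd gd) {v : ℝ} (hv : 0 < v) (hva : v < a) :
    ∃ r, 0 < r ∧ f r = v ∧ ∀ s ∈ Icc 0 r, 0 < f s := by
  obtain ⟨r1, hr1, hfr1⟩ := IsSol.exists_le hp h hv
  obtain ⟨h1, -, -, -, -, h6, -⟩ := h
  have hfc : ContinuousOn f (Ici 0) := fun r hr => (h1 r hr).continuousWithinAt
  have hivt : ∀ s, 0 ≤ s → f s ≤ v → ∃ t ∈ Icc 0 s, f t = v := by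
    intro s hs hfs
    exact intermediate_value_Icc' hs (hfc.mono Icc_subset_Ici_self) ⟨hfs, by rw [h6]; exact hva.le⟩
  have hcomp : IsCompact (Icc 0 r1 ∩ f ⁻¹' {v}) :=
    isCompact_Icc.of_isClosed_subset
      ((hfc.mono Icc_subset_Ici_self).preimage_isClosed_of_isClosed isClosed_Icc
        isClosed_singleton) inter_subset_left
  obtain ⟨t, ht, hft⟩ := hivt r1 hr1 hfr1
  obtain ⟨r, ⟨hr, hfr⟩, hleast⟩ := hcomp.exists_isLeast ⟨t, ht, hft⟩
  have hfr : f r = v := hfr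
  refine ⟨r, ?_, hfr, ?_⟩
  · rcases hr.1.eq_or_lt with h0 | h0
    · rw [← h0, h6] at hfr
      linarith
    · exact h0
  · intro s hs
    by_contra hcon
    obtain ⟨t, ht, hft⟩ := hivt s hs.1 (by linarith)
    have := hleast ⟨⟨ht.1, ht.2.trans (hs.2.trans hr.2)⟩, hft⟩
    have hrs : s = r := le_antisymm hs.2 (this.trans ht.2)
    rw [hrs, hfr] at hcon
    exact hcon hv

lemma IsSol.lt_extTime (h : IsSol p a f fd gd) {r : ℝ} (hr : 0 ≤ r)
    (hpos : ∀ s ∈ Icc 0 r, 0 < f s) : (r : EReal) < extTime f := by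
  have hc : ContinuousWithinAt f (Ici 0) r := (h.1 r hr).continuousWithinAt
  have hc' : ContinuousWithinAt f (Ici r) r := hc.mono (Ici_subset_Ici.2 hr)
  have hev : ∀ᶠ x in 𝓝[≥] r, 0 < f x :=
    hc'.eventually_const_lt (hpos r (right_mem_Icc.2 hr))
  obtain ⟨u, hu, hsub⟩ := mem_nhdsGE_iff_exists_Ico_subset.1 hev
  have hu : r < u := hu
  refine lt_of_lt_of_le (EReal.coe_lt_coe_iff.2 hu) (le_sInf ?_)
  rintro x ⟨s, hs, hfs, rfl⟩
  refine EReal.coe_le_coe_iff.2 ?_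
  by_contra! hcon
  rcases le_total s r with hsr | hsr
  · linarith [hpos s ⟨hs.le, hsr⟩]
  · have : 0 < f s := hsub ⟨hsr, hcon⟩
    linarith

/-! ### The equation for `ψ` -/

lemma PsiRel.nonneg (hp : 1 < p) (ha : 0 < a) (h : IsSol p a f fd gd) (hψ : PsiRel p a f fd ψ)
    {y : ℝ} (hy : y ∈ Ioo (0:ℝ) 1) : 0 ≤ ψ y := by
  obtain ⟨r, hr, hfr, hpos⟩ := IsSol.exists_eq hp h (v := a * (1 - y))
    (mul_pos ha (by linarith [hy.2])) (by nlinarith [hy.1])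
  have := hψ r hr.le (h.lt_extTime hr.le hpos)
  rw [hfr, mul_div_cancel_left₀ _ ha.ne', sub_sub_cancel] at this
  rw [this]
  positivity

lemma PsiRel.tendsto_zero (hp : 1 < p) (ha : 0 < a) (h : IsSol p a f fd gd)
    (hψ : PsiRel p a f fd ψ) : Tendsto ψ (𝓝[>] 0) (𝓝 0) := by
  have hfd : ContinuousWithinAt (fun r => |fd r| ^ p / a ^ p) (Ici 0) 0 := by
    have := h.2.1 0 (mem_Ici.2 le_rfl)
    exact ((this.abs).rpow_const (Or.inr (by linarith))).div_const _
  have hfd0 : |fd 0| ^ p / a ^ p = 0 := by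
    rw [h.2.2.2.2.2.2, abs_zero, Real.zero_rpow (by linarith), zero_div]
  have hf0 : f 0 = a := h.2.2.2.2.2.1
  have hfc : ContinuousOn f (Ici 0) := fun r hr => (h.1 r hr).continuousWithinAt
  have hfcw : ContinuousWithinAt f (Ici 0) 0 := hfc 0 (mem_Ici.2 le_rfl)
  rw [Metric.tendsto_nhdsWithin_nhds]
  intro ε hε
  have hev1 : ∀ᶠ r in 𝓝[≥] (0:ℝ), |fd r| ^ p / a ^ p < ε :=
    hfd.eventually_lt_const (hfd0.trans_lt hε)
  have hev2 : ∀ᶠ r in 𝓝[≥] (0:ℝ), 0 < f r := hfcw.eventually_const_lt (by rw [hf0]; exact ha)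
  obtain ⟨u, hu, hsub⟩ := mem_nhdsGE_iff_exists_Ico_subset.1 (hev1.and hev2)
  have hu : 0 < u := hu
  have hpos : ∀ s ∈ Icc 0 (u / 2), 0 < f s := fun s hs => (hsub ⟨hs.1, by linarith [hs.2]⟩).2
  have hu2 : 0 < u / 2 := by linarith
  have hanti : StrictAntiOn f (Icc 0 (u / 2)) := by
    apply strictAntiOn_of_deriv_neg (convex_Icc _ _) (hfc.mono Icc_subset_Ici_self)
    intro z hz
    rw [interior_Icc] at hz
    rw [((h.1 z hz.1.le).hasDerivAt (Ici_mem_nhds hz.1)).deriv]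
    exact IsSol.fd_neg hp h hz.1 (fun s hs => hpos s ⟨hs.1, hs.2.trans hz.2.le⟩)
  have hlt : f (u / 2) < a := by
    rw [← hf0]
    exact hanti (left_mem_Icc.2 hu2.le) (right_mem_Icc.2 hu2.le) hu2
  refine ⟨1 - f (u / 2) / a, ?_, ?_⟩
  · rw [gt_iff_lt, sub_pos, div_lt_one ha]
    exact hlt
  · intro y hy hyd
    have hy : 0 < y := hy
    rw [Real.dist_eq, sub_zero, abs_of_pos hy] at hyd
    have hlow : f (u / 2) ≤ a * (1 - y) := by
      have : f (u / 2) / a < 1 - y := by linarith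
      rw [div_lt_iff₀ ha] at this
      linarith
    obtain ⟨r, hr, hfr⟩ := intermediate_value_Icc' hu2.le (hfc.mono Icc_subset_Ici_self)
      ⟨hlow, show a * (1 - y) ≤ f 0 by rw [hf0]; nlinarith⟩
    have := hψ r hr.1 (h.lt_extTime hr.1 (fun s hs => hpos s ⟨hs.1, hs.2.trans hr.2⟩))
    rw [hfr, mul_div_cancel_left₀ _ ha.ne', sub_sub_cancel] at this
    rw [Real.dist_eq, sub_zero, this, abs_of_nonneg (by positivity)]
    exact (hsub ⟨hr.1, by linarith [hr.2]⟩).1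

/-- The first-order equation for `ψ`, obtained by inverting `r ↦ 1 - f(r)/a` locally. -/
lemma PsiRel.hasDerivAt (hp : 1 < p) (ha : 0 < a) (h : IsSol p a f fd gd)
    (hψ : PsiRel p a f fd ψ) {y : ℝ} (hy : y ∈ Ioo (0:ℝ) 1) :
    HasDerivAt ψ (p / (p - 1) * (a ^ (2 - p) * (1 - y) - ψ y ^ ((p - 1) / p))) y := by
  obtain ⟨r, hr, hfr, hpos⟩ := IsSol.exists_eq hp h (v := a * (1 - y))
    (mul_pos ha (by linarith [hy.2])) (by nlinarith [hy.1])
  have hflux := IsSol.flux_neg hp h hr hpos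
  have hfdneg := IsSol.fd_neg hp h hr hpos
  have hgdr := IsSol.gd_eq hp h hr.le
  have hψr := hψ r hr.le (h.lt_extTime hr.le hpos)
  have hp1 : p - 1 ≠ 0 := by linarith
  have hp0 : p ≠ 0 := by linarith
  have hYr : 1 - f r / a = y := by
    rw [hfr, mul_div_cancel_left₀ _ ha.ne', sub_sub_cancel]
  rw [hYr] at hψr
  have hfat : ∀ z, 0 < z → HasDerivAt f (fd z) z := fun z hz =>
    (h.1 z hz.le).hasDerivAt (Ici_mem_nhds hz)
  have hYat : ∀ z, 0 < z → HasDerivAt (fun r => 1 - f r / a) (-(fd z / a)) z := fun z hz =>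
    ((hfat z hz).div_const a).const_sub 1
  have hstrict : HasStrictDerivAt (fun r => 1 - f r / a) (-(fd r / a)) r := by
    refine hasStrictDerivAt_of_hasDerivAt_of_continuousAt (f' := fun z => -(fd z / a)) ?_ ?_
    · filter_upwards [Ioi_mem_nhds hr] with z hz using hYat z hz
    · exact ((h.2.1.continuousAt (Ici_mem_nhds hr)).div_const a).neg
  have hne : -(fd r / a) ≠ 0 := by
    exact neg_ne_zero.2 (div_neg_of_neg_of_pos hfdneg ha).ne
  set inv := hstrict.localInverse _ _ _ hne with hinv
  have hinvd : HasStrictDerivAt inv (-(fd r / a))⁻¹ y := by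
    have := hstrict.to_localInverse hne
    rwa [hYr] at this
  have hinvy : inv y = r := by
    have := (hstrict.hasStrictFDerivAt_equiv hne).localInverse_apply_image
    rw [hYr] at this
    exact this
  have hright : ∀ᶠ z in 𝓝 y, 1 - f (inv z) / a = z := by
    have := (hstrict.hasStrictFDerivAt_equiv hne).eventually_right_inverse
    rw [hYr] at this
    exact this
  have hgood : ∀ᶠ z in 𝓝 r, 0 < z ∧ ∀ s ∈ Icc 0 z, 0 < f s := by
    have hfc : ∀ᶠ z in 𝓝 r, 0 < f z :=
      (hfat r hr).continuousAt.eventually_const_lt (hpos r (right_mem_Icc.2 hr.le))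
    obtain ⟨l, u, hlu, hsub⟩ := mem_nhds_iff_exists_Ioo_subset.1 hfc
    filter_upwards [Ioi_mem_nhds hr, Iio_mem_nhds hlu.2] with z hz hzu
    refine ⟨hz, fun s hs => ?_⟩
    rcases le_total s r with hsr | hsr
    · exact hpos s ⟨hs.1, hsr⟩
    · exact hsub ⟨hlu.1.trans_le hsr, hs.2.trans_lt hzu⟩
  have hψev : ψ =ᶠ[𝓝 y] fun z => (-(|fd (inv z)| ^ (p - 2) * fd (inv z))) ^ (p / (p - 1)) / a ^ p := by
    have hinvc : Tendsto inv (𝓝 y) (𝓝 r) := by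
      have := hinvd.hasDerivAt.continuousAt.tendsto
      rwa [hinvy] at this
    filter_upwards [hright, hinvc.eventually hgood] with z hz hg
    have e1 := hψ (inv z) hg.1.le (h.lt_extTime hg.1.le hg.2)
    rw [hz] at e1
    rw [e1]
    have e2 := IsSol.flux_neg hp h hg.1 hg.2
    rw [← abs_of_neg e2, abs_flux hp, ← Real.rpow_mul (abs_nonneg _), mul_div_cancel₀ _ hp1]
  have hgat : HasDerivAt (fun s => |fd s| ^ (p - 2) * fd s) (gd r) r :=
    (h.2.2.1 r hr.le).hasDerivAt (Ici_mem_nhds hr)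
  have hW : HasDerivAt (fun s => (-(|fd s| ^ (p - 2) * fd s)) ^ (p / (p - 1)) / a ^ p)
      (-gd r * (p / (p - 1)) * (-(|fd r| ^ (p - 2) * fd r)) ^ (p / (p - 1) - 1) / a ^ p) r :=
    ((hgat.neg).rpow_const (Or.inl (by simpa using hflux.ne))).div_const _
  rw [← hinvy] at hW
  have hcomp := (hW.comp y hinvd.hasDerivAt).congr_of_eventuallyEq hψev
  refine hcomp.congr_deriv ?_
  rw [hinvy, hψr, hgdr, ← abs_of_neg hflux, abs_flux hp, hfr]
  set m := |fd r| with hm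
  have hmfd : -(fd r / a) = m / a := by rw [hm, abs_of_neg hfdneg]; ring
  have hmpos : 0 < m := abs_pos.2 hfdneg.ne
  rw [hmfd]
  have e1 : (m ^ (p - 1)) ^ (p / (p - 1) - 1) = m := by
    rw [← Real.rpow_mul hmpos.le]
    have : (p - 1) * (p / (p - 1) - 1) = 1 := by field_simp; ring
    rw [this, Real.rpow_one]
  have e2 : (m ^ p / a ^ p) ^ ((p - 1) / p) = m ^ (p - 1) * a / a ^ p := by
    rw [← Real.div_rpow hmpos.le ha.le, ← Real.rpow_mul (by positivity), mul_div_cancel₀ _ hp0,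
      Real.div_rpow hmpos.le ha.le, Real.rpow_sub ha, Real.rpow_one]
    field_simp
  have e3 : a ^ (2 - p) = a * a / a ^ p := by
    rw [Real.rpow_sub ha]
    norm_num
    ring
  rw [e1, e2, e3]
  have : 0 < a ^ p := by positivity
  field_simp
  ring

end Sol

/-! ### Comparison estimates for `ψ`

The parameters stand for `k = p/(p-1)`, `θ = 1/k` and `A = a^{2-p}`. -/

section Comparison

variable {k θ A B : ℝ} {u v : ℝ → ℝ}

/-- `u` is a nonnegative solution on `(0,1)` of `u' = k (A (1-y) - u^θ)` with
`u(0+) = 0`; the initial value is encoded as a limit, so the value of `u` at `0` is irrelevant. -/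
structure IsPhase (k θ A : ℝ) (u : ℝ → ℝ) : Prop where
  nonneg : ∀ y ∈ Ioo (0:ℝ) 1, 0 ≤ u y
  zero : Tendsto u (𝓝[>] 0) (𝓝 0)
  deriv : ∀ y ∈ Ioo (0:ℝ) 1, HasDerivAt u (k * (A * (1 - y) - u y ^ θ)) y

lemma tendsto_id_zero : Tendsto (fun y : ℝ => y) (𝓝[>] 0) (𝓝 0) :=
  tendsto_id.mono_left nhdsWithin_le_nhds

lemma IsPhase.mono (hk : 0 < k) (hθ : 0 < θ) (hAB : A ≤ B) (hu : IsPhase k θ A u)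
    (hv : IsPhase k θ B v) : ∀ y ∈ Ioo (0:ℝ) 1, u y - v y ≤ 0 := by
  refine nonpos_of_deriv_nonpos (d := 0 - 0) (by simp) (hu.zero.sub hv.zero)
    (fun y hy => (hu.deriv y hy).sub (hv.deriv y hy)) ?_
  intro y hy hpos
  have h1 : v y ^ θ ≤ u y ^ θ := Real.rpow_le_rpow (hv.nonneg y hy) (by linarith) hθ.le
  have h2 : A * (1 - y) ≤ B * (1 - y) := mul_le_mul_of_nonneg_right hAB (by linarith [hy.2])
  have := mul_le_mul_of_nonneg_left (show A * (1 - y) - u y ^ θ ≤ B * (1 - y) - v y ^ θ by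
    linarith) hk.le
  linarith

/-- Lipschitz dependence on `A`: the term `-u^θ` is dissipative. -/
lemma IsPhase.sub_le (hk : 0 < k) (hθ : 0 < θ) (hAB : A ≤ B) (hu : IsPhase k θ A u)
    (hv : IsPhase k θ B v) : ∀ y ∈ Ioo (0:ℝ) 1, v y - u y - k * (B - A) * y ≤ 0 := by
  refine nonpos_of_deriv_nonpos (d := 0 - 0 - k * (B - A) * 0) (by simp)
    ((hv.zero.sub hu.zero).sub (tendsto_id_zero.const_mul _))
    (fun y hy => ((hv.deriv y hy).sub (hu.deriv y hy)).sub ((hasDerivAt_id y).const_mul _)) ?_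
  intro y hy _
  have h1 : u y ^ θ ≤ v y ^ θ := Real.rpow_le_rpow (hu.nonneg y hy)
    (by linarith [hu.mono hk hθ hAB hv y hy]) hθ.le
  have h2 : (B - A) * (1 - y) ≤ (B - A) * 1 :=
    mul_le_mul_of_nonneg_left (by linarith [hy.1]) (by linarith)
  have := mul_le_mul_of_nonneg_left (show (B - A) * (1 - y) - (v y ^ θ - u y ^ θ) ≤ B - A by
    linarith) hk.le
  linarith

lemma IsPhase.le_linear (hk : 0 < k) (hA : 0 < A) (hu : IsPhase k θ A u) :
    ∀ y ∈ Ioo (0:ℝ) 1, u y - k * A * y ≤ 0 := by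
  refine nonpos_of_deriv_nonpos (d := 0 - k * A * 0) (by simp)
    (hu.zero.sub (tendsto_id_zero.const_mul _))
    (fun y hy => (hu.deriv y hy).sub ((hasDerivAt_id y).const_mul _)) ?_
  intro y hy _
  have h1 : 0 ≤ u y ^ θ := Real.rpow_nonneg (hu.nonneg y hy) _
  have h2 : 0 ≤ A * y := mul_nonneg hA.le hy.1.le
  have := mul_le_mul_of_nonneg_left (show A * (1 - y) - u y ^ θ ≤ A by linarith) hk.le
  linarith

/-- Inserting the linear upper bound into the equation bounds `u` from below. -/
lemma IsPhase.lower (hk : 0 < k) (hθ : 0 < θ) (hA : 0 < A) (hu : IsPhase k θ A u) :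
    ∀ y ∈ Ioo (0:ℝ) 1, k * (A * (y - y * y / 2) - (k * A) ^ θ * y) - u y ≤ 0 := by
  have hlim : Tendsto (fun y : ℝ => k * (A * (y - y * y / 2) - (k * A) ^ θ * y)) (𝓝[>] 0)
      (𝓝 0) := by
    have : Continuous (fun y : ℝ => k * (A * (y - y * y / 2) - (k * A) ^ θ * y)) := by fun_prop
    have := this.tendsto 0
    simp only [mul_zero, zero_div, sub_zero] at this
    exact this.mono_left nhdsWithin_le_nhds
  have hder : ∀ y : ℝ, HasDerivAt (fun y : ℝ => k * (A * (y - y * y / 2) - (k * A) ^ θ * y))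
      (k * (A * (1 - y) - (k * A) ^ θ)) y := by
    intro y
    have h1 := hasDerivAt_id y
    have := (((h1.sub ((h1.mul h1).div_const 2)).const_mul A).sub
      (h1.const_mul ((k * A) ^ θ))).const_mul k
    refine this.congr_deriv ?_
    simp only [id_eq]
    ring
  refine nonpos_of_deriv_nonpos (d := 0 - 0) (by simp) (hlim.sub hu.zero)
    (fun y hy => (hder y).sub (hu.deriv y hy)) ?_
  intro y hy _
  have h0 : k * A * y ≤ k * A * 1 := mul_le_mul_of_nonneg_left hy.2.le (by positivity)
  have h1 : u y ^ θ ≤ (k * A) ^ θ := Real.rpow_le_rpow (hu.nonneg y hy)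
    (by linarith [hu.le_linear hk hA y hy]) hθ.le
  have := mul_le_mul_of_nonneg_left (show A * (1 - y) - (k * A) ^ θ ≤ A * (1 - y) - u y ^ θ by
    linarith) hk.le
  linarith

/-- For small `A` the function `(2A(1-y))^k`, which vanishes at `y = 1`, is a supersolution. -/
lemma IsPhase.upper (hk : 2 < k) (hθ : k * θ = 1) (hA : 0 < A)
    (hsmall : (2 * A) ^ (k - 1) ≤ 1 / 2) (hu : IsPhase k θ A u) :
    ∀ y ∈ Ioo (0:ℝ) 1, u y - (2 * A * (1 - y)) ^ k ≤ 0 := by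
  have hθ0 : 0 < θ := by
    by_contra! hcon
    nlinarith
  have hlim : Tendsto (fun y : ℝ => (2 * A * (1 - y)) ^ k) (𝓝[>] 0) (𝓝 ((2 * A) ^ k)) := by
    have : Continuous (fun y : ℝ => (2 * A * (1 - y)) ^ k) :=
      (by fun_prop : Continuous (fun y : ℝ => 2 * A * (1 - y))).rpow_const
        (fun _ => Or.inr (by linarith))
    have := this.tendsto 0
    simp only [sub_zero, mul_one] at this
    exact this.mono_left nhdsWithin_le_nhds
  have hder : ∀ y ∈ Ioo (0:ℝ) 1, HasDerivAt (fun y : ℝ => (2 * A * (1 - y)) ^ k)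
      (2 * A * (-1) * k * (2 * A * (1 - y)) ^ (k - 1)) y := by
    intro y hy
    have h1 := (((hasDerivAt_id y).const_sub 1).const_mul (2 * A))
    exact h1.rpow_const (Or.inr (by linarith))
  refine nonpos_of_deriv_nonpos (d := 0 - (2 * A) ^ k)
    (by linarith [Real.rpow_nonneg (by positivity : 0 ≤ 2 * A) k]) (hu.zero.sub hlim)
    (fun y hy => (hu.deriv y hy).sub (hder y hy)) ?_
  intro y hy hpos
  have hy1 : 0 < 1 - y := by linarith [hy.2]
  have h1 : 2 * A * (1 - y) ≤ u y ^ θ := by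
    have : ((2 * A * (1 - y)) ^ k) ^ θ ≤ u y ^ θ :=
      Real.rpow_le_rpow (by positivity) (by linarith) hθ0.le
    rwa [← Real.rpow_mul (by positivity), hθ, Real.rpow_one] at this
  have h2 : (2 * A * (1 - y)) ^ (k - 1) ≤ 1 / 2 * (1 - y) := by
    rw [Real.mul_rpow (by positivity) hy1.le]
    have : (1 - y) ^ (k - 1) ≤ (1 - y) ^ (1:ℝ) :=
      Real.rpow_le_rpow_of_exponent_ge hy1 (by linarith [hy.1]) (by linarith)
    rw [Real.rpow_one] at this
    exact mul_le_mul hsmall this (by positivity) (by norm_num)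
  have h3 := mul_le_mul_of_nonneg_left h2 (by positivity : 0 ≤ 2 * A)
  have := mul_le_mul_of_nonneg_left
    (show A * (1 - y) - u y ^ θ + 2 * A * (2 * A * (1 - y)) ^ (k - 1) ≤ 0 by linarith)
    (by linarith : 0 ≤ k)
  linarith

end Comparison

lemma le_of_tendsto_one {u v : ℝ → ℝ} {l m : ℝ} (hu : Tendsto u (𝓝[<] 1) (𝓝 l))
    (hv : Tendsto v (𝓝[<] 1) (𝓝 m)) (h : ∀ y ∈ Ioo (0:ℝ) 1, u y - v y ≤ 0) : l ≤ m := by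
  refine le_of_tendsto_of_tendsto hu hv ?_
  filter_upwards [Ioo_mem_nhdsLT (zero_lt_one : (0:ℝ) < 1)] with y hy
  linarith [h y hy]

/-! ### The set of positive limits -/

/-- With `ℓ(a) := lim_{y→1} ψ(y,a)`, there exists `a^* > 0` such that
`𝒜 := {a > 0 : ℓ(a) > 0}` equals the open interval `(a^*, ∞)`. -/
theorem stmt10 (p : ℝ) (hp : p ∈ Set.Ioo (1:ℝ) 2)
    (f fd gd ψ : ℝ → ℝ → ℝ) (ℓ : ℝ → ℝ)
    (hf : ∀ a, 0 < a → IsSol p a (f a) (fd a) (gd a))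
    (hrel : ∀ a, 0 < a → PsiRel p a (f a) (fd a) (ψ a))
    (hl : ∀ a, 0 < a → 0 ≤ ℓ a ∧ Tendsto (ψ a) (𝓝[<] (1:ℝ)) (𝓝 (ℓ a))) :
    ∃ astar : ℝ, 0 < astar ∧ {a : ℝ | 0 < a ∧ 0 < ℓ a} = Set.Ioi astar := by
  obtain ⟨hp1, hp2⟩ := hp
  set k := p / (p - 1) with hk
  set θ := (p - 1) / p with hθ
  have hpm : 0 < p - 1 := by linarith
  have hk2 : 2 < k := by rw [hk, lt_div_iff₀ hpm]; linarith
  have hk0 : 0 < k := by linarith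
  have hθ0 : 0 < θ := by rw [hθ]; positivity
  have hθ1 : θ < 1 := by rw [hθ, div_lt_one (by linarith)]; linarith
  have hkθ : k * θ = 1 := by rw [hk, hθ]; field_simp
  have hph : ∀ a, 0 < a → IsPhase k θ (a ^ (2 - p)) (ψ a) := fun a ha =>
    ⟨fun y hy => (hrel a ha).nonneg hp1 ha (hf a ha) hy,
      (hrel a ha).tendsto_zero hp1 ha (hf a ha),
      fun y hy => (hrel a ha).hasDerivAt hp1 ha (hf a ha) hy⟩
  have hAmono : ∀ a b : ℝ, 0 < a → a ≤ b → a ^ (2 - p) ≤ b ^ (2 - p) := fun a b ha hab =>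
    Real.rpow_le_rpow ha.le hab (by linarith)
  have hmono : ∀ a b : ℝ, 0 < a → a ≤ b → ℓ a ≤ ℓ b := by
    intro a b ha hab
    have hb := ha.trans_le hab
    exact le_of_tendsto_one (hl a ha).2 (hl b hb).2
      ((hph a ha).mono hk0 hθ0 (hAmono a b ha hab) (hph b hb))
  have hpoly : ∀ {q : ℝ → ℝ}, Continuous q → Tendsto q (𝓝[<] 1) (𝓝 (q 1)) := fun hq =>
    (hq.tendsto 1).mono_left nhdsWithin_le_nhds
  have hlip : ∀ a b : ℝ, 0 < a → a ≤ b → ℓ b ≤ ℓ a + k * (b ^ (2 - p) - a ^ (2 - p)) := by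
    intro a b ha hab
    have hb := ha.trans_le hab
    have hc : Continuous (fun y : ℝ => k * (b ^ (2 - p) - a ^ (2 - p)) * y) := by fun_prop
    have := le_of_tendsto_one (hl b hb).2 ((hl a ha).2.add (hpoly hc))
      (fun y hy => by
        have := (hph a ha).sub_le hk0 hθ0 (hAmono a b ha hab) (hph b hb) y hy
        linarith)
    simpa using this
  -- a value of `a` with `(2 a^{2-p})^{1/(p-1)} = 1/2`
  obtain ⟨a0, ha0, hla0⟩ : ∃ a0, 0 < a0 ∧ ℓ a0 = 0 := by
    refine ⟨((1 / 2 : ℝ) ^ p) ^ (1 / (2 - p)), by positivity, ?_⟩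
    set a0 : ℝ := ((1 / 2 : ℝ) ^ p) ^ (1 / (2 - p)) with ha0
    have ha0p : 0 < a0 := by positivity
    have hA : a0 ^ (2 - p) = (1 / 2 : ℝ) ^ p := by
      rw [ha0, ← Real.rpow_mul (by positivity), one_div_mul_cancel (by linarith), Real.rpow_one]
    have hsmall : (2 * a0 ^ (2 - p)) ^ (k - 1) ≤ 1 / 2 := by
      have e1 : 2 * a0 ^ (2 - p) = (1 / 2 : ℝ) ^ (p - 1) := by
        rw [hA, Real.rpow_sub_one (by norm_num)]
        ring
      have e2 : (p - 1) * (k - 1) = 1 := by rw [hk]; field_simp; ring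
      rw [e1, ← Real.rpow_mul (by norm_num), e2, Real.rpow_one]
    have hc : Continuous (fun y : ℝ => (2 * a0 ^ (2 - p) * (1 - y)) ^ k) :=
      (by fun_prop : Continuous (fun y : ℝ => 2 * a0 ^ (2 - p) * (1 - y))).rpow_const
        (fun _ => Or.inr hk0.le)
    have := le_of_tendsto_one (hl a0 ha0p).2 (hpoly hc)
      ((hph a0 ha0p).upper hk2 hkθ (by positivity) hsmall)
    simp only [sub_self, mul_zero, Real.zero_rpow hk0.ne'] at this
    exact le_antisymm this (hl a0 ha0p).1
  obtain ⟨a1, ha1, hla1⟩ : ∃ a1, 0 < a1 ∧ 0 < ℓ a1 := by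
    have hev := ((tendsto_rpow_atTop (show 0 < 1 - θ by linarith)).eventually_gt_atTop
      (2 * k ^ θ)).and (eventually_gt_atTop (0:ℝ))
    obtain ⟨A, hA1, hA0⟩ := hev.exists
    have haA : (A ^ (1 / (2 - p))) ^ (2 - p) = A := by
      rw [← Real.rpow_mul hA0.le, one_div_mul_cancel (by linarith), Real.rpow_one]
    have hap : 0 < A ^ (1 / (2 - p)) := by positivity
    refine ⟨A ^ (1 / (2 - p)), hap, ?_⟩
    have hP := hph _ hap
    rw [haA] at hP
    have hc : Continuous (fun y : ℝ => k * (A * (y - y * y / 2) - (k * A) ^ θ * y)) := by fun_prop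
    have h1 := le_of_tendsto_one (hpoly hc) (hl _ hap).2 (hP.lower hk0 hθ0 hA0)
    refine lt_of_lt_of_le (mul_pos hk0 ?_) h1
    have h2 : A ^ (1 - θ) * A ^ θ = A := by
      rw [← Real.rpow_add hA0, sub_add_cancel, Real.rpow_one]
    have h3 : 2 * k ^ θ * A ^ θ < A ^ (1 - θ) * A ^ θ :=
      mul_lt_mul_of_pos_right hA1 (by positivity)
    rw [Real.mul_rpow hk0.le hA0.le]
    linarith
  set S : Set ℝ := {a : ℝ | 0 < a ∧ 0 < ℓ a} with hS
  have hSlow : ∀ a ∈ S, a0 ≤ a := by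
    rintro a ⟨ha, hla⟩
    by_contra! hcon
    linarith [hmono a a0 ha hcon.le]
  have hbdd : BddBelow S := ⟨a0, hSlow⟩
  have hne : S.Nonempty := ⟨a1, ha1, hla1⟩
  refine ⟨sInf S, ha0.trans_le (le_csInf hne hSlow), ?_⟩
  ext a
  constructor
  · rintro ⟨ha, hla⟩
    have hcont : ContinuousAt (fun b : ℝ => k * (a ^ (2 - p) - b ^ (2 - p))) a :=
      ((Real.continuousAt_rpow_const a (2 - p) (Or.inl ha.ne')).const_sub _).const_mul k
    have hev : ∀ᶠ b in 𝓝[<] a, k * (a ^ (2 - p) - b ^ (2 - p)) < ℓ a :=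
      (hcont.eventually_lt_const (by simpa using hla)).filter_mono nhdsWithin_le_nhds
    obtain ⟨b, hb1, hb2⟩ := (hev.and (Ioo_mem_nhdsLT ha)).exists
    have hbS : b ∈ S := ⟨hb2.1, by linarith [hlip b a hb2.1 hb2.2.le]⟩
    exact (csInf_le hbdd hbS).trans_lt hb2.2
  · intro ha
    obtain ⟨b, hb, hba⟩ := exists_lt_of_csInf_lt hne ha
    exact ⟨hb.1.trans hba, hb.2.trans_le (hmono b a hb.1 hba.le)⟩
end

section
/- Let p ∈ (1,2) and set κ := (p-1)^{-p}. For a > 0 let ψ(·,a) be the function associated with the unique solution f(·,a) of (|f'|^{p-2} f')' + f - |f'|^{p-1} = 0, f(0) = a, f'(0) = 0, via ψ(1-f(r,a)/a, a) = |f'(r,a)|^p/a^p. Let a_* > 0 be such that { a > 0 : ψ(y,a)(1-y)^{-p} → 0 as y → 1 } = (0,a_*) and a^* > 0 be such that { a > 0 : lim_{y→1} ψ(y,a) > 0 } = (a^*,∞). Then a_* = a^*, and the set ℬ := { a > 0 : ψ(y,a)(1-y)^{-p} → κ as y → 1 } is the singleton {a_*}; in other words, there is exactly one value a > 0 for which lim_{y→1}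 ψ(y,a)(1-y)^{-p} = (p-1)^{-p}. -/
/-!
With `q = 1/(p-1) > 1` and `g = |f'|^{p-1}`, the equation becomes, as long as `f > 0`, the planar
autonomous system `f' = -g^q`, `g' = f - g`. Two facts give the theorem.

*Trichotomy* (`IsSol.trichotomy`). If `f` vanishes at a finite time, `f'` is nonzero there, so `ψ`
has a positive limit. Otherwise `f → 0`, and the logarithmic slope `v = |f'|/f`, for which
`ψ(y) (1 - y)^{-p} = v^p`, solves the Riccati equation `v' = v (v - q) + q g^{q-1}`. Blow-up above
the level `q` is impossible for a global solution, so `v < q`; this forces `g → 0`, and the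
limiting equation `v' = v (v - q)` leaves only `v → q` and `v → 0`. Since `q^p = κ`, the fast-decay
set `ℬ` is what remains of `(0, ∞)` after removing `(0, a_*)` and `(a^*, ∞)`, namely `[a_*, a^*]`.

*Uniqueness* (`FastProfile.not_lt`). In the variable `y = 1 - f/a`, the function
`Φ = ψ^{1/(q+1)} = g / a^{p-1}` solves `Φ' = (c (1 - y) - Φ) / Φ^q` with `Φ(0) = 0` and
`c = a^{2-p}`. For `c₁ < c₂` this yields `Φ₁ < Φ₂` on `(0, 1)`. For fast decay
`Φ^q ~ q (1 - y)`, hence `1 - y` is negligible against `Φ` near `y = 1`, and there the right-hand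
side is nondecreasing in `Φ` as well as in `c`. So `Φ₂ - Φ₁` would be positive, nondecreasing near
`y = 1`, and tend to `0` at `y = 1`, which is absurd. As `a ↦ a^{2-p}` is strictly increasing,
`[a_*, a^*]` is a single point.
-/

open Set Filter Topology

/-! ### Global solutions in the phase plane -/

/-- A constant is an upper barrier on `[r₀, ∞)` when the function decreases wherever it meets it. -/
lemma le_of_barrier {u u' : ℝ → ℝ} {r₀ c : ℝ}
    (hu : ∀ r, r₀ ≤ r → HasDerivAt u (u' r) r) (h0 : u r₀ ≤ c)
    (hb : ∀ r, r₀ ≤ r → u r = c → u' r < 0) {r : ℝ} (hr : r₀ ≤ r) : u r ≤ c :=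
  image_le_of_deriv_right_lt_deriv_boundary (a := r₀) (b := r)
    (fun x hx => (hu x hx.1).continuousAt.continuousWithinAt)
    (fun x hx => (hu x hx.1).hasDerivWithinAt) (B := fun _ => c) (B' := fun _ => 0) h0
    (fun x => hasDerivAt_const x c) (fun x hx h => hb x hx.1 h) (right_mem_Icc.2 hr)

lemma exists_neg_of_deriv_le {u u' : ℝ → ℝ} {r₀ k : ℝ} (hk : 0 < k)
    (hu : ∀ r, r₀ ≤ r → HasDerivAt u (u' r) r) (hd : ∀ r, r₀ ≤ r → u' r ≤ -k) :
    ∃ r, r₀ ≤ r ∧ u r < 0 := by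
  have hanti : AntitoneOn (fun r => u r + k * r) (Ici r₀) := by
    have hd' : ∀ r, r₀ ≤ r → HasDerivAt (fun r => u r + k * r) (u' r + k * 1) r :=
      fun r hr => (hu r hr).add ((hasDerivAt_id r).const_mul k)
    refine antitoneOn_of_hasDerivWithinAt_nonpos (convex_Ici r₀) (f' := fun r => u' r + k * 1)
      (fun r hr => (hd' r hr).continuousAt.continuousWithinAt) ?_ ?_
    · intro r hr
      rw [interior_Ici] at hr
      exact (hd' r (le_of_lt hr)).hasDerivWithinAt
    · intro r hr
      rw [interior_Ici] at hr
      have := hd r (le_of_lt hr)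
      linarith
  have hpos : 0 ≤ (|u r₀| + 1) / k := by positivity
  refine ⟨r₀ + (|u r₀| + 1) / k, by linarith, ?_⟩
  have h := hanti (mem_Ici.2 le_rfl) (mem_Ici.2 (by linarith : r₀ ≤ r₀ + (|u r₀| + 1) / k))
    (by linarith)
  have h2 : k * ((|u r₀| + 1) / k) = |u r₀| + 1 := by field_simp
  have := le_abs_self (u r₀)
  simp only [mul_add, h2] at h
  linarith

/-- A solution that stays positive for all time, in the phase plane: `g = |f'|^{p-1}` and
`q = 1/(p-1)` turn the equation into the autonomous system `f' = -g^q`, `g' = f - g`. -/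
structure GlobalOrbit (q a : ℝ) (f g : ℝ → ℝ) : Prop where
  f0 : f 0 = a
  fcont : ContinuousOn f (Ici 0)
  g0 : Tendsto g (𝓝[>] 0) (𝓝 0)
  fpos : ∀ r, 0 < r → 0 < f r
  gpos : ∀ r, 0 < r → 0 < g r
  fder : ∀ r, 0 < r → HasDerivAt f (-(g r) ^ q) r
  gder : ∀ r, 0 < r → HasDerivAt g (f r - g r) r

namespace GlobalOrbit

variable {q a : ℝ} {f g : ℝ → ℝ}

lemma strictAnti (h : GlobalOrbit q a f g) : StrictAntiOn f (Ici 0) := by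
  refine strictAntiOn_of_hasDerivWithinAt_neg (convex_Ici 0) (f' := fun r => -(g r) ^ q) h.fcont
    ?_ ?_
  · intro r hr
    rw [interior_Ici] at hr
    exact (h.fder r hr).hasDerivWithinAt
  · intro r hr
    rw [interior_Ici] at hr
    have := Real.rpow_pos_of_pos (h.gpos r hr) q
    linarith

/-- If `f ≥ ε` then `g` stays above a positive level, and `f' = -g^q` drives `f` below zero. -/
lemma f_tendsto (h : GlobalOrbit q a f g) (hq : 1 < q) : Tendsto f atTop (𝓝 0) := by
  have key : ∀ ε > 0, ∃ r, 0 < r ∧ f r < ε := by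
    intro ε hε
    by_contra! hcon
    set m := min (g 1) (ε / 2) with hm
    have hm0 : 0 < m := lt_min (h.gpos 1 one_pos) (by linarith)
    have hg : ∀ r, 1 ≤ r → m ≤ g r := by
      intro r hr
      have := le_of_barrier (u := fun r => -g r) (u' := fun r => -(f r - g r)) (r₀ := 1) (c := -m)
        (fun r hr => (h.gder r (by linarith)).neg) (neg_le_neg (min_le_left _ _))
        (fun r hr (he : -g r = -m) => by
          have h1 := hcon r (by linarith)
          have h2 : m ≤ ε / 2 := min_le_right _ _
          linarith) hr
      exact neg_le_neg_iff.1 this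
    obtain ⟨r, hr, hneg⟩ := exists_neg_of_deriv_le (u := f) (u' := fun r => -(g r) ^ q)
      (r₀ := 1) (k := m ^ q) (Real.rpow_pos_of_pos hm0 q) (fun r hr => h.fder r (by linarith))
      (fun r hr => neg_le_neg (Real.rpow_le_rpow hm0.le (hg r hr) (by linarith)))
    exact absurd hneg (not_lt.2 (h.fpos r (by linarith)).le)
  rw [Metric.tendsto_atTop]
  intro ε hε
  obtain ⟨r, hr, hfr⟩ := key ε hε
  refine ⟨r, fun s hs => ?_⟩
  have h1 := h.strictAnti.antitoneOn (mem_Ici.2 hr.le) (mem_Ici.2 (by linarith : (0:ℝ) ≤ s)) hs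
  rw [Real.dist_eq, sub_zero, abs_of_pos (h.fpos s (by linarith))]
  linarith

lemma v_pos (h : GlobalOrbit q a f g) {r : ℝ} (hr : 0 < r) : 0 < g r ^ q / f r :=
  div_pos (Real.rpow_pos_of_pos (h.gpos r hr) q) (h.fpos r hr)

/-- The logarithmic slope `v = |f'|/f = g^q/f` solves the Riccati equation
`v' = v (v - q) + q g^{q-1}`. -/
lemma v_der (h : GlobalOrbit q a f g) {r : ℝ} (hr : 0 < r) :
    HasDerivAt (fun r => g r ^ q / f r)
      ((g r ^ q / f r) * (g r ^ q / f r - q) + q * g r ^ (q - 1)) r := by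
  have hf := h.fpos r hr
  have hg := h.gpos r hr
  have h1 := ((h.gder r hr).rpow_const (p := q) (Or.inl hg.ne')).div (h.fder r hr) hf.ne'
  refine h1.congr_deriv ?_
  have h2 : g r ^ q = g r * g r ^ (q - 1) := by
    rw [Real.rpow_sub_one hg.ne']
    field_simp
  rw [h2]
  field_simp
  ring

/-- Above the level `q` the Riccati equation would blow up in finite time. -/
lemma v_lt (h : GlobalOrbit q a f g) (hq : 1 < q) {r : ℝ} (hr : 0 < r) :
    g r ^ q / f r < q := by
  by_contra! hcon
  set v : ℝ → ℝ := fun r => g r ^ q / f r with hv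
  have hvpos : ∀ s, 0 < s → 0 < v s := fun s hs => h.v_pos hs
  have hder : ∀ s, r ≤ s → HasDerivAt v (v s * (v s - q) + q * g s ^ (q - 1)) s :=
    fun s hs => h.v_der (by linarith)
  have he : ∀ s, r ≤ s → 0 < q * g s ^ (q - 1) := fun s hs =>
    mul_pos (by linarith) (Real.rpow_pos_of_pos (h.gpos s (by linarith)) _)
  have hge : ∀ s, r ≤ s → q ≤ v s := by
    intro s hs
    have := le_of_barrier (u := fun s => -v s)
      (u' := fun s => -(v s * (v s - q) + q * g s ^ (q - 1))) (r₀ := r) (c := -q)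
      (fun s hs => (hder s hs).neg) (by simpa using hcon)
      (fun s hs h1 => by
        have h1' : v s = q := by simpa using h1
        have := he s hs
        rw [h1']
        linarith) hs
    simpa using this
  have hmono : StrictMonoOn v (Ici r) := by
    refine strictMonoOn_of_hasDerivWithinAt_pos (convex_Ici r)
      (f' := fun s => v s * (v s - q) + q * g s ^ (q - 1))
      (fun s hs => (hder s hs).continuousAt.continuousWithinAt) ?_ ?_
    · intro s hs
      rw [interior_Ici] at hs
      exact (hder s (le_of_lt hs)).hasDerivWithinAt
    · intro s hs
      rw [interior_Ici] at hs
      have h1 := hge s (le_of_lt hs)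
      have h2 := he s (le_of_lt hs)
      have : 0 ≤ v s * (v s - q) := mul_nonneg (by linarith) (by linarith)
      linarith
  set w := v (r + 1) with hw
  have hwq : q < w := lt_of_le_of_lt hcon
    (hmono (mem_Ici.2 le_rfl) (mem_Ici.2 (by linarith)) (by linarith))
  have hk : 0 < 1 - q / w := by
    rw [sub_pos, div_lt_one (by linarith)]
    exact hwq
  obtain ⟨s, hs, hneg⟩ := exists_neg_of_deriv_le (u := fun s => (v s)⁻¹)
    (u' := fun s => -(v s * (v s - q) + q * g s ^ (q - 1)) / v s ^ 2) (r₀ := r + 1) hk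
    (fun s hs => (hder s (by linarith)).inv (hvpos s (by linarith)).ne')
    (fun s hs => by
      have hws : w ≤ v s := hmono.monotoneOn (mem_Ici.2 (by linarith)) (mem_Ici.2 (by linarith)) hs
      have h1 := he s (by linarith)
      have h2 : 0 < v s := by linarith
      have h3 : q / v s ≤ q / w := div_le_div_of_nonneg_left (by linarith) (by linarith) hws
      have h4 : -(v s * (v s - q) + q * g s ^ (q - 1)) / v s ^ 2 ≤ -(v s * (v s - q)) / v s ^ 2 := by
        gcongr
        linarith
      have h5 : -(v s * (v s - q)) / v s ^ 2 = -(1 - q / v s) := by field_simp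
      rw [h5] at h4
      linarith)
  exact absurd hneg (not_lt.2 (inv_pos.2 (hvpos s (by linarith))).le)

lemma g_tendsto (h : GlobalOrbit q a f g) (hq : 1 < q) :
    Tendsto (fun r => g r ^ (q - 1)) atTop (𝓝 0) := by
  have h1 : Tendsto (fun r => g r ^ q) atTop (𝓝 0) := by
    have h2 : Tendsto (fun r => q * f r) atTop (𝓝 0) := by
      simpa using (h.f_tendsto hq).const_mul q
    refine tendsto_of_tendsto_of_tendsto_of_le_of_le' tendsto_const_nhds h2 ?_ ?_
    · filter_upwards [eventually_gt_atTop 0] with r hr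
      exact (Real.rpow_pos_of_pos (h.gpos r hr) q).le
    · filter_upwards [eventually_gt_atTop 0] with r hr
      exact ((div_lt_iff₀ (h.fpos r hr)).1 (h.v_lt hq hr)).le
  have he : 0 < (q - 1) / q := div_pos (by linarith) (by linarith)
  have h2 := h1.rpow_const (p := (q - 1) / q) (Or.inr he.le)
  rw [Real.zero_rpow he.ne'] at h2
  refine h2.congr' ?_
  filter_upwards [eventually_gt_atTop 0] with r hr
  rw [← Real.rpow_mul (h.gpos r hr).le, mul_div_cancel₀]
  linarith

/-- Slow/fast dichotomy. As `g^{q-1} → 0`, the Riccati equation is asymptotically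
`v' = v (v - q)`, whose equilibrium `q` is repelling and whose equilibrium `0` attracts `[0, q)`. -/
lemma v_dichotomy (h : GlobalOrbit q a f g) (hq : 1 < q) :
    Tendsto (fun r => g r ^ q / f r) atTop (𝓝 q) ∨
      Tendsto (fun r => g r ^ q / f r) atTop (𝓝 0) := by
  refine or_iff_not_imp_left.2 fun hnot => ?_
  set v : ℝ → ℝ := fun r => g r ^ q / f r with hv
  have hvpos : ∀ s, 0 < s → 0 < v s := fun s hs => h.v_pos hs
  have hvq : ∀ s, 0 < s → v s < q := fun s hs => h.v_lt hq hs
  have hder : ∀ s, 0 < s → HasDerivAt v (v s * (v s - q) + q * g s ^ (q - 1)) s :=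
    fun s hs => h.v_der hs
  have he : Tendsto (fun r => q * g r ^ (q - 1)) atTop (𝓝 0) := by
    simpa using (h.g_tendsto hq).const_mul q
  obtain ⟨δ, hδ, hfreq⟩ : ∃ δ > 0, ∀ M, ∃ s, M ≤ s ∧ v s ≤ q - δ := by
    rw [Metric.tendsto_atTop] at hnot
    push Not at hnot
    obtain ⟨δ, hδ, hM⟩ := hnot
    refine ⟨δ, hδ, fun M => ?_⟩
    obtain ⟨s, hs, hd⟩ := hM (max M 1)
    have hs1 : 1 ≤ s := le_trans (le_max_right _ _) hs
    have := hvq s (by linarith)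
    rw [Real.dist_eq, abs_sub_comm, abs_of_pos (by linarith)] at hd
    exact ⟨s, le_trans (le_max_left _ _) hs, by linarith⟩
  have hδq : 0 < q - δ := by
    obtain ⟨s, hs, hle⟩ := hfreq 1
    exact lt_of_lt_of_le (hvpos s (by linarith)) hle
  obtain ⟨M, hM⟩ := (he.eventually (gt_mem_nhds (mul_pos hδ hδq))).exists_forall_of_atTop
  obtain ⟨r₀, hr₀, hvr₀⟩ := hfreq (max M 1)
  have hr₀M : M ≤ r₀ := le_trans (le_max_left _ _) hr₀
  have hr₀1 : 1 ≤ r₀ := le_trans (le_max_right _ _) hr₀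
  have hle : ∀ s, r₀ ≤ s → v s ≤ q - δ := fun s hs =>
    le_of_barrier (fun s hs => hder s (by linarith)) hvr₀
      (fun s hs h1 => by
        have := hM s (by linarith)
        rw [h1]
        nlinarith) hs
  have hdle : ∀ s, r₀ ≤ s →
      v s * (v s - q) + q * g s ^ (q - 1) ≤ -δ * v s + q * g s ^ (q - 1) := by
    intro s hs
    nlinarith [hle s hs, hvpos s (by linarith)]
  rw [Metric.tendsto_atTop]
  intro ε hε
  obtain ⟨N, hN⟩ := (he.eventually
    (gt_mem_nhds (by positivity : 0 < δ * (ε / 2) / 2))).exists_forall_of_atTop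
  obtain ⟨r₂, hr₂, hvr₂⟩ : ∃ r₂, max N r₀ ≤ r₂ ∧ v r₂ ≤ ε / 2 := by
    by_contra! hcon
    obtain ⟨s, hs, hneg⟩ := exists_neg_of_deriv_le (u := v)
      (r₀ := max N r₀) (k := δ * (ε / 2) / 2) (by positivity)
      (fun s hs => hder s (by linarith [le_max_right N r₀]))
      (fun s hs => by
        have h1 := hdle s (by linarith [le_max_right N r₀])
        have h2 := hN s (by linarith [le_max_left N r₀])
        have h3 := mul_lt_mul_of_pos_left (hcon s hs) hδ
        linarith)
    exact absurd hneg (not_lt.2 (hvpos s (by linarith [le_max_right N r₀])).le)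
  have hr₂N : N ≤ r₂ := le_trans (le_max_left _ _) hr₂
  have hr₂0 : r₀ ≤ r₂ := le_trans (le_max_right _ _) hr₂
  refine ⟨r₂, fun s hs => ?_⟩
  have h1 : v s ≤ ε / 2 := le_of_barrier (fun s hs => hder s (by linarith)) hvr₂
    (fun s hs h1 => by
      have h2 := hdle s (by linarith)
      have h3 := hN s (by linarith)
      rw [h1] at h2 ⊢
      have : 0 < δ * (ε / 2) := by positivity
      linarith) hs
  rw [Real.dist_eq, sub_zero, abs_of_pos (hvpos s (by linarith))]
  linarith

/-- The inverse `T` of the normalized drop `r ↦ 1 - f r / a` from `(0, ∞)` onto `(0, 1)`. -/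
lemma exists_inverse (h : GlobalOrbit q a f g) (hq : 1 < q) (ha : 0 < a) :
    ∃ T : ℝ → ℝ, (∀ y ∈ Ioo (0:ℝ) 1, 0 < T y ∧ f (T y) = a * (1 - y) ∧
        HasDerivAt T (a / g (T y) ^ q) y) ∧
      Tendsto T (𝓝[<] 1) atTop ∧ Tendsto T (𝓝[>] 0) (𝓝[>] 0) := by
  have hex : ∀ y ∈ Ioo (0:ℝ) 1, ∃ r, 0 < r ∧ f r = a * (1 - y) := by
    intro y hy
    have h1 : 0 < a * (1 - y) := mul_pos ha (by linarith [hy.2])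
    obtain ⟨b, hb, hb0⟩ := (((h.f_tendsto hq).eventually (gt_mem_nhds h1)).and
      (eventually_gt_atTop 0)).exists
    obtain ⟨r, hr, he⟩ := intermediate_value_Ioo' hb0.le
      (h.fcont.mono Icc_subset_Ici_self) ⟨hb, by rw [h.f0]; nlinarith [hy.1]⟩
    exact ⟨r, hr.1, he⟩
  choose! T hT0 hT using hex
  have hlt : ∀ y ∈ Ioo (0:ℝ) 1, ∀ r, 0 < r → (r < T y ↔ a * (1 - y) < f r) := by
    intro y hy r hr
    rw [← hT y hy]
    exact (h.strictAnti.lt_iff_gt (mem_Ici.2 (hT0 y hy).le) (mem_Ici.2 hr.le)).symm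
  have hgt : ∀ y ∈ Ioo (0:ℝ) 1, ∀ r, 0 < r → (T y < r ↔ f r < a * (1 - y)) := by
    intro y hy r hr
    rw [← hT y hy]
    exact (h.strictAnti.lt_iff_gt (mem_Ici.2 hr.le) (mem_Ici.2 (hT0 y hy).le)).symm
  have hfa : ∀ r, 0 < r → f r < a := fun r hr => by
    simpa [h.f0] using h.strictAnti (mem_Ici.2 le_rfl) (mem_Ici.2 hr.le) hr
  have hcancel : ∀ r, a * (1 - (1 - f r / a)) = f r := fun r => by field_simp; ring
  have himg : ∀ r, 0 < r → 1 - f r / a ∈ Ioo (0:ℝ) 1 := by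
    intro r hr
    have h1 : f r / a < 1 := (div_lt_one ha).2 (hfa r hr)
    have h2 : 0 < f r / a := div_pos (h.fpos r hr) ha
    exact ⟨by linarith, by linarith⟩
  have hmono : StrictMonoOn T (Ioo 0 1) := by
    intro y hy z hz hyz
    rw [hlt z hz _ (hT0 y hy), hT y hy]
    nlinarith
  have himage : T '' Ioo 0 1 = Ioi 0 := by
    ext r
    constructor
    · rintro ⟨y, hy, rfl⟩
      exact hT0 y hy
    · intro hr
      refine ⟨1 - f r / a, himg r hr, ?_⟩
      refine h.strictAnti.injOn (mem_Ici.2 (hT0 _ (himg r hr)).le) (mem_Ici.2 (le_of_lt hr)) ?_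
      rw [hT _ (himg r hr), hcancel]
  refine ⟨T, fun y hy => ⟨hT0 y hy, hT y hy, ?_⟩, ?_, ?_⟩
  · have hc : ContinuousAt T y := hmono.continuousAt_of_image_mem_nhds
      (isOpen_Ioo.mem_nhds hy) (by rw [himage]; exact isOpen_Ioi.mem_nhds (hT0 y hy))
    have hd : HasDerivAt (fun r => 1 - f r / a) (g (T y) ^ q / a) (T y) := by
      exact (((h.fder _ (hT0 y hy)).div_const a).const_sub 1).congr_deriv (by ring)
    have := HasDerivAt.of_local_left_inverse hc hd
      (div_pos (Real.rpow_pos_of_pos (h.gpos _ (hT0 y hy)) q) ha).ne'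
      (by
        filter_upwards [isOpen_Ioo.mem_nhds hy] with z hz
        rw [hT z hz]
        field_simp
        ring)
    rwa [inv_div] at this
  · refine tendsto_atTop.2 fun M => ?_
    have hM : 0 < max M 1 := lt_max_of_lt_right one_pos
    filter_upwards [Ioo_mem_nhdsLT (himg _ hM).2] with y hy
    have hy' : y ∈ Ioo (0:ℝ) 1 := ⟨lt_trans (himg _ hM).1 hy.1, hy.2⟩
    refine (le_max_left M 1).trans ((hlt y hy' _ hM).2 ?_).le
    rw [← hcancel (max M 1)]
    have := hy.1
    gcongr
  · refine tendsto_nhdsWithin_iff.2 ⟨?_, ?_⟩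
    · refine Metric.tendsto_nhds.2 fun ε hε => ?_
      filter_upwards [Ioo_mem_nhdsGT (himg ε hε).1] with y hy
      have hy' : y ∈ Ioo (0:ℝ) 1 := ⟨hy.1, lt_trans hy.2 (himg ε hε).2⟩
      rw [Real.dist_eq, sub_zero, abs_of_pos (hT0 y hy'), hgt y hy' _ hε, ← hcancel ε]
      have := hy.2
      gcongr
    · filter_upwards [Ioo_mem_nhdsGT one_pos] with y hy
      exact hT0 y hy

end GlobalOrbit

/-! ### Uniqueness of the fast-decay profile -/

/-- A fast-decay orbit in the normalized variable `y = 1 - f/a ∈ (0, 1)`: `Φ = ψ^{1/(q+1)}`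
solves the first-order equation with parameter `c = a^{2-p}`, and `ψ (1 - y)^{-p} → κ` becomes
`Φ^q / (1 - y) → q`. -/
structure FastProfile (q c : ℝ) (Φ : ℝ → ℝ) : Prop where
  pos : ∀ y ∈ Ioo (0:ℝ) 1, 0 < Φ y
  der : ∀ y ∈ Ioo (0:ℝ) 1, HasDerivAt Φ ((c * (1 - y) - Φ y) / Φ y ^ q) y
  zero : Tendsto Φ (𝓝[>] 0) (𝓝 0)
  fast : Tendsto (fun y => Φ y ^ q / (1 - y)) (𝓝[<] 1) (𝓝 q)

namespace FastProfile

variable {q c c₁ c₂ : ℝ} {Φ Φ₁ Φ₂ : ℝ → ℝ}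

lemma pow_der (h : FastProfile q c Φ) {y : ℝ} (hy : y ∈ Ioo (0:ℝ) 1) :
    HasDerivAt (fun y => Φ y ^ (q + 1)) ((q + 1) * (c * (1 - y) - Φ y)) y := by
  have hp := h.pos y hy
  have hpq := Real.rpow_pos_of_pos hp q
  refine ((h.der y hy).rpow_const (p := q + 1) (Or.inl hp.ne')).congr_deriv ?_
  rw [add_sub_cancel_right]
  field_simp

/-- Profiles increase strictly with the parameter. The difference `E` of the `(q+1)`-st powers
vanishes at `y = 0`, and wherever the ordering fails `E` is strictly decreasing; followed backwards
from such a point, `E` would stay away from `0`. -/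
lemma lt_of_lt (h₁ : FastProfile q c₁ Φ₁) (h₂ : FastProfile q c₂ Φ₂) (hq : 1 < q)
    (hc : c₁ < c₂) {y : ℝ} (hy : y ∈ Ioo (0:ℝ) 1) : Φ₁ y < Φ₂ y := by
  by_contra! hcon
  set E : ℝ → ℝ := fun y => Φ₁ y ^ (q + 1) - Φ₂ y ^ (q + 1) with hE
  set E' : ℝ → ℝ := fun y => (q + 1) * (c₁ * (1 - y) - Φ₁ y) - (q + 1) * (c₂ * (1 - y) - Φ₂ y)
    with hE'
  have hder : ∀ z ∈ Ioo (0:ℝ) 1, HasDerivAt E (E' z) z :=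
    fun z hz => (h₁.pow_der hz).sub (h₂.pow_der hz)
  have hneg : ∀ z ∈ Ioo (0:ℝ) 1, 0 ≤ E z → E' z < 0 := by
    intro z hz hEz
    have h1 : Φ₂ z ≤ Φ₁ z :=
      (Real.rpow_le_rpow_iff (h₂.pos z hz).le (h₁.pos z hz).le (by linarith : 0 < q + 1)).1
        (sub_nonneg.1 hEz)
    have h2 : 0 < (c₂ - c₁) * (1 - z) := mul_pos (by linarith) (by linarith [hz.2])
    have h3 : 0 < (q + 1) * ((c₂ - c₁) * (1 - z) + (Φ₁ z - Φ₂ z)) :=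
      mul_pos (by linarith) (by linarith)
    simp only [hE']
    linarith
  have hEy : 0 ≤ E y := sub_nonneg.2 (Real.rpow_le_rpow (h₂.pos y hy).le hcon (by linarith))
  have hge : ∀ z, 0 < z → z ≤ y → E y ≤ E z := by
    intro z hz hzy
    have hd : ∀ t ∈ Icc (-y) (-z), HasDerivAt (fun t => -E (-t)) (E' (-t)) t := by
      intro t ht
      have ht' : -t ∈ Ioo (0:ℝ) 1 := ⟨by linarith [ht.2], by linarith [ht.1, hy.2]⟩
      exact ((hder (-t) ht').scomp t (hasDerivAt_neg t)).neg.congr_deriv (by simp)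
    have := image_le_of_deriv_right_lt_deriv_boundary (f := fun t => -E (-t))
      (f' := fun t => E' (-t)) (a := -y) (b := -z)
      (fun t ht => (hd t ht).continuousAt.continuousWithinAt)
      (fun t ht => (hd t ⟨ht.1, ht.2.le⟩).hasDerivWithinAt) (B := fun _ => -E y)
      (B' := fun _ => 0) (by simp) (fun t => hasDerivAt_const t _)
      (fun t ht he => hneg (-t) ⟨by linarith [ht.2], by linarith [ht.1, hy.2]⟩ (by
        have he' : -E (-t) = -E y := he
        linarith)) (right_mem_Icc.2 (by linarith))
    simpa using this
  have hanti : StrictAntiOn E (Ioc 0 y) := by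
    have hsub : ∀ z ∈ Ioc 0 y, z ∈ Ioo (0:ℝ) 1 := fun z hz => ⟨hz.1, lt_of_le_of_lt hz.2 hy.2⟩
    refine strictAntiOn_of_hasDerivWithinAt_neg (convex_Ioc 0 y) (f' := E')
      (fun z hz => (hder z (hsub z hz)).continuousAt.continuousWithinAt) ?_ ?_
    · intro z hz
      exact (hder z (hsub z (interior_subset hz))).hasDerivWithinAt
    · intro z hz
      have hz' := interior_subset hz
      exact hneg z (hsub z hz') (hEy.trans (hge z hz'.1 hz'.2))
  have hy0 := hy.1
  have hhalf : 0 < E (y / 2) := lt_of_le_of_lt hEy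
    (hanti ⟨by linarith, by linarith⟩ ⟨hy0, le_rfl⟩ (by linarith))
  have hlim : Tendsto E (𝓝[>] 0) (𝓝 0) := by
    have hq0 : 0 < q + 1 := by linarith
    have := (h₁.zero.rpow_const (p := q + 1) (Or.inr hq0.le)).sub
      (h₂.zero.rpow_const (p := q + 1) (Or.inr hq0.le))
    rwa [sub_self] at this
  have : E (y / 2) ≤ 0 := by
    refine ge_of_tendsto hlim ?_
    filter_upwards [Ioo_mem_nhdsGT (by linarith : (0:ℝ) < y / 2)] with z hz
    exact hanti.antitoneOn ⟨hz.1, by linarith [hz.2]⟩ ⟨by linarith, by linarith⟩ hz.2.le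
  linarith

lemma tendsto_one (h : FastProfile q c Φ) (hq : 1 < q) : Tendsto Φ (𝓝[<] 1) (𝓝 0) := by
  have h0 : Tendsto (fun y : ℝ => 1 - y) (𝓝[<] 1) (𝓝 0) := by
    have : Tendsto (fun y : ℝ => 1 - y) (𝓝 1) (𝓝 (1 - 1)) := tendsto_const_nhds.sub tendsto_id
    rw [sub_self] at this
    exact this.mono_left nhdsWithin_le_nhds
  have h1 := ((h.fast.mul h0).rpow_const (p := q⁻¹) (Or.inr (inv_nonneg.2 (by linarith))))
  rw [mul_zero, Real.zero_rpow (inv_ne_zero (by linarith))] at h1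
  refine h1.congr' ?_
  filter_upwards [Ioo_mem_nhdsLT one_pos] with y hy
  rw [div_mul_cancel₀ _ (by linarith [hy.2]), Real.rpow_rpow_inv (h.pos y hy).le (by linarith)]

lemma eventually_le (h : FastProfile q c Φ) (hq : 1 < q) :
    ∀ᶠ y in 𝓝[<] (1:ℝ), q * (c * (1 - y)) ≤ (q - 1) * Φ y := by
  have h1 := ((h.tendsto_one hq).rpow_const (p := q - 1) (Or.inr (by linarith))).mul
    (h.fast.inv₀ (by linarith))
  rw [Real.zero_rpow (by linarith), zero_mul] at h1
  have h2 := h1.const_mul (q * c)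
  rw [mul_zero] at h2
  filter_upwards [h2.eventually (gt_mem_nhds (by linarith : 0 < q - 1)),
    Ioo_mem_nhdsLT one_pos] with y hy hy1
  have hp := h.pos y hy1
  have h3 : 0 < 1 - y := by linarith [hy1.2]
  have h4 : q * c * (Φ y ^ (q - 1) * (Φ y ^ q / (1 - y))⁻¹) = q * (c * (1 - y)) / Φ y := by
    have := Real.rpow_pos_of_pos hp q
    rw [Real.rpow_sub_one hp.ne']
    field_simp
  rw [h4, div_lt_iff₀ hp] at hy
  exact hy.le

/-- The right-hand side of the profile equation is nondecreasing in `Φ` in the region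
`Φ ≥ q c (1 - y) / (q - 1)`; here `x` stands for `c (1 - y)`. -/
lemma rhs_mono {x s t : ℝ} (hq : 1 < q) (hs : 0 < s) (hx : q * x ≤ (q - 1) * s) (hst : s ≤ t) :
    (x - s) / s ^ q ≤ (x - t) / t ^ q := by
  have hd : ∀ u ∈ Icc s t, HasDerivAt (fun u => (x - u) / u ^ q)
      (((0 - 1) * u ^ q - (x - u) * (1 * q * u ^ (q - 1))) / (u ^ q) ^ 2) u := by
    intro u hu
    have hu0 : 0 < u := lt_of_lt_of_le hs hu.1
    exact ((hasDerivAt_const u x).sub (hasDerivAt_id u)).div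
      ((hasDerivAt_id u).rpow_const (Or.inl hu0.ne')) (Real.rpow_pos_of_pos hu0 q).ne'
  refine monotoneOn_of_hasDerivWithinAt_nonneg (convex_Icc s t)
    (fun u hu => (hd u hu).continuousAt.continuousWithinAt)
    (fun u hu => (hd u (interior_subset hu)).hasDerivWithinAt) ?_
    (left_mem_Icc.2 hst) (right_mem_Icc.2 hst) hst
  intro u hu
  have hu' := interior_subset hu
  have hu0 : 0 < u := lt_of_lt_of_le hs hu'.1
  refine div_nonneg ?_ (by positivity)
  have h1 : u ^ q = u * u ^ (q - 1) := by
    rw [Real.rpow_sub_one hu0.ne']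
    field_simp
  have h2 : (0 - 1) * u ^ q - (x - u) * (1 * q * u ^ (q - 1))
      = u ^ (q - 1) * ((q - 1) * u - q * x) := by
    rw [h1]
    ring
  rw [h2]
  have h3 : (q - 1) * s ≤ (q - 1) * u := mul_le_mul_of_nonneg_left hu'.1 (by linarith)
  exact mul_nonneg (Real.rpow_pos_of_pos hu0 _).le (by linarith)

/-- Fast profiles exist for at most one parameter: the positive difference `Φ₂ - Φ₁` would be
nondecreasing near `y = 1`, although it tends to `0` there. -/
lemma not_lt (h₁ : FastProfile q c₁ Φ₁) (h₂ : FastProfile q c₂ Φ₂) (hq : 1 < q) :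
    ¬ c₁ < c₂ := by
  intro hc
  obtain ⟨y₀, hy₀, hev⟩ := mem_nhdsLT_iff_exists_Ioo_subset.1 (h₁.eventually_le hq)
  set y₁ := (max y₀ 0 + 1) / 2 with hy₁
  have hmax : max y₀ 0 < 1 := max_lt hy₀ one_pos
  have hy₁0 : 0 < y₁ := by linarith [le_max_right y₀ 0]
  have hy₁1 : y₁ < 1 := by linarith
  have hy₁₀ : y₀ < y₁ := by linarith [le_max_left y₀ 0]
  have hsub : ∀ z ∈ Ico y₁ 1, z ∈ Ioo (0:ℝ) 1 := fun z hz => ⟨lt_of_lt_of_le hy₁0 hz.1, hz.2⟩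
  have hd : ∀ z ∈ Ico y₁ 1, HasDerivAt (fun z => Φ₂ z - Φ₁ z)
      ((c₂ * (1 - z) - Φ₂ z) / Φ₂ z ^ q - (c₁ * (1 - z) - Φ₁ z) / Φ₁ z ^ q) z :=
    fun z hz => (h₂.der z (hsub z hz)).sub (h₁.der z (hsub z hz))
  have hmono : MonotoneOn (fun z => Φ₂ z - Φ₁ z) (Ico y₁ 1) := by
    refine monotoneOn_of_hasDerivWithinAt_nonneg (convex_Ico y₁ 1)
      (fun u hu => (hd u hu).continuousAt.continuousWithinAt)
      (fun u hu => (hd u (interior_subset hu)).hasDerivWithinAt) ?_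
    intro z hz
    have hz' := interior_subset hz
    have hz1 := hsub z hz'
    have h1 : q * (c₁ * (1 - z)) ≤ (q - 1) * Φ₁ z :=
      hev ⟨lt_of_lt_of_le hy₁₀ hz'.1, hz'.2⟩
    have h2 := rhs_mono hq (h₁.pos z hz1) h1 (h₁.lt_of_lt h₂ hq hc hz1).le
    have h3 : (c₁ * (1 - z) - Φ₂ z) / Φ₂ z ^ q ≤ (c₂ * (1 - z) - Φ₂ z) / Φ₂ z ^ q := by
      have h4 := Real.rpow_pos_of_pos (h₂.pos z hz1) q
      have h5 : 0 ≤ 1 - z := by linarith [hz1.2]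
      gcongr
    linarith
  have hlim : Tendsto (fun z => Φ₂ z - Φ₁ z) (𝓝[<] 1) (𝓝 0) := by
    simpa using (h₂.tendsto_one hq).sub (h₁.tendsto_one hq)
  have h1 : Φ₂ y₁ - Φ₁ y₁ ≤ 0 := by
    refine ge_of_tendsto hlim ?_
    filter_upwards [Ioo_mem_nhdsLT hy₁1] with z hz
    exact hmono ⟨le_rfl, hy₁1⟩ ⟨hz.1.le, hz.2⟩ hz.1.le
  linarith [h₁.lt_of_lt h₂ hq hc ⟨hy₁0, hy₁1⟩]

end FastProfile

/-! ### From the differential equation to the trichotomy -/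

lemma f_pos_of_ne {f : ℝ → ℝ} (hc : ContinuousOn f (Ici 0)) (h0 : 0 < f 0) {b : ℝ}
    (hb : ∀ r, 0 < r → r < b → f r ≠ 0) {r : ℝ} (hr : 0 ≤ r) (hrb : r < b) : 0 < f r := by
  by_contra! hcon
  obtain ⟨s, hs, he⟩ := intermediate_value_Icc' hr (hc.mono Icc_subset_Ici_self)
    (mem_Icc.2 ⟨hcon, h0.le⟩)
  rcases eq_or_lt_of_le hs.1 with h | h
  · rw [← h] at he
    linarith
  · exact hb s h (lt_of_le_of_lt hs.2 hrb) he

namespace IsSol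

variable {p a : ℝ} {f fd gd : ℝ → ℝ}

lemma fcont (h : IsSol p a f fd gd) : ContinuousOn f (Ici 0) :=
  fun r hr => (h.1 r hr).continuousWithinAt

lemma fder (h : IsSol p a f fd gd) {r : ℝ} (hr : 0 < r) : HasDerivAt f (fd r) r :=
  (h.1 r (mem_Ici.2 hr.le)).hasDerivAt (Ici_mem_nhds hr)

lemma gcont (h : IsSol p a f fd gd) (hp : 1 < p) :
    ContinuousOn (fun r => |fd r| ^ (p - 1)) (Ici 0) :=
  h.2.1.abs.rpow_const fun _ _ => Or.inr (by linarith)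

lemma gd_zero (h : IsSol p a f fd gd) (hp : 1 < p) : gd 0 = -a := by
  have hc : ContinuousOn (fun r => gd r + f r - |fd r| ^ (p - 1)) (Ici 0) :=
    (h.2.2.2.1.add h.fcont).sub (h.gcont hp)
  have h1 : Tendsto (fun r => gd r + f r - |fd r| ^ (p - 1)) (𝓝[>] 0)
      (𝓝 (gd 0 + f 0 - |fd 0| ^ (p - 1))) :=
    (hc 0 (mem_Ici.2 le_rfl)).mono_left (nhdsWithin_mono _ Ioi_subset_Ici_self)
  have h2 : Tendsto (fun r => gd r + f r - |fd r| ^ (p - 1)) (𝓝[>] 0) (𝓝 0) :=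
    tendsto_const_nhds.congr' (by
      filter_upwards [self_mem_nhdsWithin] with r hr
      exact (h.2.2.2.2.1 r hr).symm)
  have h3 := tendsto_nhds_unique h1 h2
  rw [h.2.2.2.2.2.1, h.2.2.2.2.2.2, abs_zero, Real.zero_rpow (by linarith)] at h3
  linarith

/-- As long as `f` is positive, `f' < 0` and `g = |f'|^{p-1}` satisfies `g' = f - g`; moreover `g`
is still positive at the end of the interval. The flux `w = |f'|^{p-2} f'` cannot cross zero
upwards since `w' = -f < 0` there, and `e^r g` is increasing. -/
lemma facts (h : IsSol p a f fd gd) (hp : 1 < p) (ha : 0 < a) {b : ℝ} (hb : 0 < b)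
    (hpos : ∀ r, 0 < r → r < b → 0 < f r) :
    (∀ r, 0 < r → r < b →
      fd r < 0 ∧ HasDerivAt (fun r => |fd r| ^ (p - 1)) (f r - |fd r| ^ (p - 1)) r) ∧
    fd b ≠ 0 := by
  set w : ℝ → ℝ := fun s => |fd s| ^ (p - 2) * fd s with hw
  have hwder : ∀ r, 0 ≤ r → HasDerivWithinAt w (gd r) (Ici 0) r := fun r hr => h.2.2.1 r hr
  have hgd : ∀ r, 0 < r → gd r = |fd r| ^ (p - 1) - f r := fun r hr => by
    have := h.2.2.2.2.1 r hr
    linarith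
  have hwzero : ∀ r, w r = 0 → fd r = 0 := by
    intro r hr
    by_contra hne
    have := Real.rpow_pos_of_pos (abs_pos.2 hne) (p - 2)
    exact hne ((mul_eq_zero.1 hr).resolve_left this.ne')
  have hwle : ∀ r, 0 ≤ r → r < b → w r ≤ 0 := by
    intro r hr hrb
    refine image_le_of_deriv_right_lt_deriv_boundary (f := w) (f' := gd) (a := 0) (b := r)
      (fun x hx => ((hwder x hx.1).continuousWithinAt).mono Icc_subset_Ici_self)
      (fun x hx => (hwder x hx.1).mono (Ici_subset_Ici.2 hx.1)) (B := fun _ => 0)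
      (B' := fun _ => 0) (by simp [hw, h.2.2.2.2.2.2]) (fun x => hasDerivAt_const x 0)
      (fun x hx he => ?_) (right_mem_Icc.2 hr)
    rcases eq_or_lt_of_le hx.1 with h0 | h0
    · rw [← h0, h.gd_zero hp]
      linarith
    · rw [hgd x h0, hwzero x he, abs_zero, Real.zero_rpow (by linarith)]
      have := hpos x h0 (lt_trans hx.2 hrb)
      linarith
  have hfdle : ∀ r, 0 ≤ r → r < b → fd r ≤ 0 := by
    intro r hr hrb
    by_contra! hcon
    have h1 := hwle r hr hrb
    have h2 := mul_pos (Real.rpow_pos_of_pos (abs_pos.2 hcon.ne') (p - 2)) hcon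
    exact absurd h1 (not_le.2 h2)
  have hgw : ∀ r, 0 ≤ r → r < b → |fd r| ^ (p - 1) = -w r := by
    intro r hr hrb
    rcases eq_or_lt_of_le (hfdle r hr hrb) with h0 | h0
    · simp only [hw, h0, abs_zero, mul_zero, neg_zero]
      exact Real.zero_rpow (by linarith)
    · have h1 : p - 1 = p - 2 + 1 := by ring
      rw [h1, Real.rpow_add_one (abs_pos.2 h0.ne).ne']
      simp only [hw]
      rw [abs_of_neg h0]
      ring
  have hgder : ∀ r, 0 < r → r < b →
      HasDerivAt (fun r => |fd r| ^ (p - 1)) (f r - |fd r| ^ (p - 1)) r := by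
    intro r hr hrb
    have h1 : HasDerivAt (fun r => -w r) (-gd r) r :=
      ((hwder r hr.le).hasDerivAt (Ici_mem_nhds hr)).neg
    have h2 : HasDerivAt (fun r => |fd r| ^ (p - 1)) (-gd r) r := by
      refine h1.congr_of_eventuallyEq ?_
      filter_upwards [isOpen_Ioo.mem_nhds (⟨hr, hrb⟩ : r ∈ Ioo 0 b)] with s hs
      exact hgw s hs.1.le hs.2
    exact h2.congr_deriv (by rw [hgd r hr]; ring)
  have hmono : StrictMonoOn (fun r => Real.exp r * |fd r| ^ (p - 1)) (Icc 0 b) := by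
    refine strictMonoOn_of_hasDerivWithinAt_pos (convex_Icc 0 b)
      (f' := fun r => Real.exp r * |fd r| ^ (p - 1) + Real.exp r * (f r - |fd r| ^ (p - 1)))
      (Real.continuous_exp.continuousOn.mul ((h.gcont hp).mono Icc_subset_Ici_self)) ?_ ?_
    · intro r hr
      rw [interior_Icc] at hr
      exact ((Real.hasDerivAt_exp r).mul (hgder r hr.1 hr.2)).hasDerivWithinAt
    · intro r hr
      rw [interior_Icc] at hr
      have := mul_pos (Real.exp_pos r) (hpos r hr.1 hr.2)
      linarith
  have hne : ∀ r, 0 < r → r ≤ b → fd r ≠ 0 := by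
    intro r hr hrb h0
    have h1 := hmono ⟨le_rfl, hb.le⟩ ⟨hr.le, hrb⟩ hr
    simp only [h0, h.2.2.2.2.2.2, abs_zero] at h1
    rw [Real.zero_rpow (by linarith)] at h1
    simp at h1
  exact ⟨fun r hr hrb => ⟨lt_of_le_of_ne (hfdle r hr.le hrb) (hne r hr hrb.le), hgder r hr hrb⟩,
    hne b hb le_rfl⟩

/-- Extinction in finite time `b`: then `f'(b) ≠ 0`, and `ψ` tends to `|f'(b)|^p / a^p > 0`. -/
lemma tendsto_of_zero (h : IsSol p a f fd gd) (hp : 1 < p) (ha : 0 < a) {ψ : ℝ → ℝ}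
    (hψ : PsiRel p a f fd ψ) (hz : ∃ r, 0 < r ∧ f r = 0) :
    ∃ ℓ : ℝ, 0 < ℓ ∧ Tendsto ψ (𝓝[<] (1:ℝ)) (𝓝 ℓ) := by
  have hf0 : f 0 = a := h.2.2.2.2.2.1
  set Z := Ici (0:ℝ) ∩ f ⁻¹' {0} with hZ
  have hclosed : IsClosed Z := h.fcont.preimage_isClosed_of_isClosed isClosed_Ici isClosed_singleton
  have hbdd : BddBelow Z := ⟨0, fun z hz => hz.1⟩
  obtain ⟨b, hb⟩ : ∃ b, b = sInf Z := ⟨_, rfl⟩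
  have hbZ : b ∈ Z := by
    rw [hb]
    refine hclosed.csInf_mem ?_ hbdd
    obtain ⟨r, hr, he⟩ := hz
    exact ⟨r, hr.le, he⟩
  have hle : ∀ z, 0 ≤ z → f z = 0 → b ≤ z := fun z hz he => by
    rw [hb]
    exact csInf_le hbdd ⟨hz, he⟩
  have hfb : f b = 0 := hbZ.2
  have hb0 : 0 < b := by
    refine lt_of_le_of_ne hbZ.1 fun h0 => ?_
    rw [← h0] at hfb
    linarith
  have hpos : ∀ r, 0 ≤ r → r < b → 0 < f r := fun r hr hrb =>
    f_pos_of_ne h.fcont (by rw [hf0]; exact ha)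
      (fun s hs hsb he => absurd (hle s hs.le he) (not_le.2 hsb)) hr hrb
  have hext : ∀ r, r < b → (r : EReal) < extTime f := fun r hr => by
    refine lt_of_lt_of_le (EReal.coe_lt_coe_iff.2 hr) (le_sInf ?_)
    rintro x ⟨s, hs, he, rfl⟩
    exact EReal.coe_le_coe_iff.2 (hle s hs.le he)
  obtain ⟨hfacts, hfdb⟩ := h.facts hp ha hb0 (fun r hr hrb => hpos r hr.le hrb)
  have hanti : StrictAntiOn f (Icc 0 b) := by
    refine strictAntiOn_of_hasDerivWithinAt_neg (convex_Icc 0 b) (f' := fd)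
      (h.fcont.mono Icc_subset_Ici_self) ?_ ?_
    · intro r hr
      rw [interior_Icc] at hr
      exact (h.fder hr.1).hasDerivWithinAt
    · intro r hr
      rw [interior_Icc] at hr
      exact (hfacts r hr.1 hr.2).1
  have hG : ContinuousOn (fun r => |fd r| ^ p / a ^ p) (Ici 0) :=
    (h.2.1.abs.rpow_const fun _ _ => Or.inr (by linarith)).div_const _
  refine ⟨|fd b| ^ p / a ^ p, div_pos (Real.rpow_pos_of_pos (abs_pos.2 hfdb) p)
    (Real.rpow_pos_of_pos ha p), ?_⟩
  intro V hV
  have hGb : ContinuousAt (fun r => |fd r| ^ p / a ^ p) b := hG.continuousAt (Ici_mem_nhds hb0)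
  obtain ⟨c', hc', hsub⟩ := exists_Ioc_subset_of_mem_nhds (hGb hV) ⟨0, hb0⟩
  have hcb : max c' 0 < b := max_lt hc' hb0
  have hc0 : 0 ≤ max c' 0 := le_max_right _ _
  have hfc := hpos _ hc0 hcb
  have hlt : 1 - f (max c' 0) / a < 1 := by linarith [div_pos hfc ha]
  refine mem_map.2 ?_
  filter_upwards [Ioo_mem_nhdsLT hlt] with y hy
  have hy1 : a * (1 - y) < f (max c' 0) := by
    have := hy.1
    rw [mul_comm, ← lt_div_iff₀ ha]
    linarith
  obtain ⟨r, hr, he⟩ := intermediate_value_Ioo' hcb.le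
    (h.fcont.mono (Icc_subset_Ici_self.trans (Ici_subset_Ici.2 hc0)))
    ⟨by rw [hfb]; exact mul_pos ha (by linarith [hy.2]), hy1⟩
  have hψy : ψ y = |fd r| ^ p / a ^ p := by
    rw [← hψ r (hc0.trans hr.1.le) (hext r hr.2), he]
    congr 1
    field_simp
    ring
  change ψ y ∈ V
  rw [hψy]
  exact hsub ⟨lt_of_le_of_lt (le_max_left _ _) hr.1, hr.2.le⟩

/-- `|f'| = (|f'|^{p-1})^q` with `q = 1/(p-1)`. -/
lemma abs_fd_eq (hp : 1 < p) (x : ℝ) : |x| = (|x| ^ (p - 1)) ^ (p - 1)⁻¹ :=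
  (Real.rpow_rpow_inv (abs_nonneg x) (by linarith)).symm

lemma globalOrbit (h : IsSol p a f fd gd) (hp : 1 < p) (ha : 0 < a)
    (hz : ∀ r, 0 < r → f r ≠ 0) :
    GlobalOrbit (p - 1)⁻¹ a f (fun r => |fd r| ^ (p - 1)) := by
  have hf0 : f 0 = a := h.2.2.2.2.2.1
  have hpos : ∀ r, 0 < r → 0 < f r := fun r hr =>
    f_pos_of_ne h.fcont (by rw [hf0]; exact ha) (fun s hs _ => hz s hs) hr.le
      (by linarith : r < r + 1)
  have hfacts : ∀ r, 0 < r →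
      fd r < 0 ∧ HasDerivAt (fun r => |fd r| ^ (p - 1)) (f r - |fd r| ^ (p - 1)) r :=
    fun r hr => (h.facts hp ha (by linarith : 0 < r + 1) (fun s hs _ => hpos s hs)).1 r hr
      (by linarith)
  refine ⟨hf0, h.fcont, ?_, hpos, ?_, ?_, fun r hr => (hfacts r hr).2⟩
  · have h1 := ((h.gcont hp) 0 (mem_Ici.2 le_rfl)).mono_left
      (nhdsWithin_mono 0 Ioi_subset_Ici_self)
    simpa [h.2.2.2.2.2.2, Real.zero_rpow (by linarith : p - 1 ≠ 0)] using h1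
  · intro r hr
    exact Real.rpow_pos_of_pos (abs_pos.2 (hfacts r hr).1.ne) _
  · intro r hr
    refine (h.fder hr).congr_deriv ?_
    rw [← abs_fd_eq hp, abs_of_neg (hfacts r hr).1, neg_neg]

/-- The trichotomy, with a fast profile attached to the fast-decay alternative. -/
lemma trichotomy (h : IsSol p a f fd gd) (hp : p ∈ Ioo (1:ℝ) 2) (ha : 0 < a) {ψ : ℝ → ℝ}
    (hψ : PsiRel p a f fd ψ) :
    (∃ ℓ : ℝ, 0 < ℓ ∧ Tendsto ψ (𝓝[<] (1:ℝ)) (𝓝 ℓ)) ∨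
    (Tendsto (fun y => ψ y * (1 - y) ^ (-p)) (𝓝[<] (1:ℝ)) (𝓝 ((p - 1) ^ (-p))) ∧
      ∃ Φ, FastProfile (p - 1)⁻¹ (a ^ (2 - p)) Φ) ∨
    Tendsto (fun y => ψ y * (1 - y) ^ (-p)) (𝓝[<] (1:ℝ)) (𝓝 0) := by
  obtain ⟨hp1, hp2⟩ := hp
  refine or_iff_not_imp_left.2 fun hA => ?_
  have hz : ∀ r, 0 < r → f r ≠ 0 := fun r hr he =>
    hA (h.tendsto_of_zero hp1 ha hψ ⟨r, hr, he⟩)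
  have hext : ∀ r : ℝ, (r : EReal) < extTime f := fun r => by
    have : extTime f = ⊤ := by
      refine sInf_eq_top.2 ?_
      rintro x ⟨s, hs, he, rfl⟩
      exact absurd he (hz s hs)
    rw [this]
    exact EReal.coe_lt_top r
  have hp0 : 0 < p - 1 := by linarith
  have hq : 1 < (p - 1)⁻¹ := (one_lt_inv₀ hp0).2 (by linarith)
  have horb := h.globalOrbit hp1 ha hz
  set q := (p - 1)⁻¹ with hqdef
  set g : ℝ → ℝ := fun r => |fd r| ^ (p - 1) with hg
  obtain ⟨T, hT, hT1, hT0⟩ := horb.exists_inverse hq ha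
  have hrel : ∀ y ∈ Ioo (0:ℝ) 1, ψ y * (1 - y) ^ (-p) = (g (T y) ^ q / f (T y)) ^ p := by
    intro y hy
    obtain ⟨hTp, hTf, -⟩ := hT y hy
    have h1 : (0:ℝ) < 1 - y := by linarith [hy.2]
    have h2 : ψ y = |fd (T y)| ^ p / a ^ p := by
      rw [← hψ (T y) hTp.le (hext _), hTf]
      congr 1
      field_simp
      ring
    have h3 : g (T y) ^ q = |fd (T y)| := (abs_fd_eq hp1 _).symm
    rw [h2, h3, hTf, Real.rpow_neg h1.le, Real.div_rpow (abs_nonneg _) (mul_pos ha h1).le,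
      Real.mul_rpow ha.le h1.le]
    have := Real.rpow_pos_of_pos ha p
    have := Real.rpow_pos_of_pos h1 p
    field_simp
  have htr : ∀ L : ℝ, Tendsto (fun r => g r ^ q / f r) atTop (𝓝 L) →
      Tendsto (fun y => ψ y * (1 - y) ^ (-p)) (𝓝[<] (1:ℝ)) (𝓝 (L ^ p)) := by
    intro L hL
    refine ((hL.comp hT1).rpow_const (p := p) (Or.inr (by linarith))).congr' ?_
    filter_upwards [Ioo_mem_nhdsLT one_pos] with y hy
    exact (hrel y hy).symm
  rcases horb.v_dichotomy hq with hv | hv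
  · left
    constructor
    · have := htr q hv
      rwa [hqdef, Real.inv_rpow hp0.le, ← Real.rpow_neg hp0.le] at this
    · have hA0 : 0 < a ^ (p - 1) := Real.rpow_pos_of_pos ha _
      have hpow : ∀ r, 0 < r → (g r / a ^ (p - 1)) ^ q = g r ^ q / a := fun r hr => by
        rw [Real.div_rpow (horb.gpos r hr).le hA0.le, Real.rpow_rpow_inv ha.le hp0.ne']
      refine ⟨fun y => g (T y) / a ^ (p - 1), fun y hy => ?_, fun y hy => ?_, ?_, ?_⟩
      · exact div_pos (horb.gpos _ (hT y hy).1) hA0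
      · obtain ⟨hTp, hTf, hTd⟩ := hT y hy
        refine (((horb.gder _ hTp).comp y hTd).div_const (a ^ (p - 1))).congr_deriv ?_
        rw [hpow _ hTp, hTf]
        have h1 := Real.rpow_pos_of_pos (horb.gpos _ hTp) q
        have h2 : a = a ^ (2 - p) * a ^ (p - 1) := by
          rw [← Real.rpow_add ha]
          norm_num
        have h3 : a * (1 - y) - g (T y)
            = a ^ (p - 1) * (a ^ (2 - p) * (1 - y) - g (T y) / a ^ (p - 1)) := by
          rw [mul_sub (a ^ (p - 1)), mul_div_cancel₀ _ hA0.ne']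
          nth_rw 1 [h2]
          ring
        rw [h3]
        field_simp
      · simpa using (horb.g0.comp hT0).div_const (a ^ (p - 1))
      · refine (hv.comp hT1).congr' ?_
        filter_upwards [Ioo_mem_nhdsLT one_pos] with y hy
        obtain ⟨hTp, hTf, -⟩ := hT y hy
        simp only [Function.comp]
        rw [hpow _ hTp, hTf, div_div]
  · right
    have := htr 0 hv
    rwa [Real.zero_rpow (by linarith)] at this

end IsSol

lemma not_tendsto_pos {p ℓ M : ℝ} (hp : 0 < p) {ψ : ℝ → ℝ} (hℓ : 0 < ℓ)
    (h : Tendsto ψ (𝓝[<] (1:ℝ)) (𝓝 ℓ)) :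
    ¬ Tendsto (fun y => ψ y * (1 - y) ^ (-p)) (𝓝[<] (1:ℝ)) (𝓝 M) := by
  intro hM
  have h0 : Tendsto (fun y : ℝ => 1 - y) (𝓝[<] 1) (𝓝 0) := by
    have : Tendsto (fun y : ℝ => 1 - y) (𝓝 1) (𝓝 (1 - 1)) := tendsto_const_nhds.sub tendsto_id
    rw [sub_self] at this
    exact this.mono_left nhdsWithin_le_nhds
  have h1 := hM.mul (h0.rpow_const (p := p) (Or.inr hp.le))
  rw [Real.zero_rpow hp.ne', mul_zero] at h1
  have h2 : Tendsto ψ (𝓝[<] (1:ℝ)) (𝓝 0) := by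
    refine h1.congr' ?_
    filter_upwards [self_mem_nhdsWithin] with y hy
    have h3 : (0:ℝ) < 1 - y := sub_pos.2 hy
    rw [Real.rpow_neg h3.le, inv_mul_cancel_right₀ (Real.rpow_pos_of_pos h3 p).ne']
  exact hℓ.ne (tendsto_nhds_unique h2 h)

/-! ### The fast-decay set is a single point -/

/-- If `{a > 0 : ψ(y,a)(1-y)^{-p} → 0} = (0,a_*)` and
`{a > 0 : lim_{y→1} ψ(y,a) > 0} = (a^*,∞)`, then `a_* = a^*` and
`ℬ := {a > 0 : ψ(y,a)(1-y)^{-p} → κ} = {a_*}`, with `κ := (p-1)^{-p}`. -/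
theorem stmt14 (p : ℝ) (hp : p ∈ Set.Ioo (1:ℝ) 2)
    (f fd gd ψ : ℝ → ℝ → ℝ)
    (hf : ∀ a, 0 < a → IsSol p a (f a) (fd a) (gd a))
    (hrel : ∀ a, 0 < a → PsiRel p a (f a) (fd a) (ψ a))
    (astar asup : ℝ) (hstar : 0 < astar) (hsup : 0 < asup)
    (hC : {a : ℝ | 0 < a ∧
        Tendsto (fun y => ψ a y * (1-y) ^ (-p)) (𝓝[<] (1:ℝ)) (𝓝 0)} = Set.Ioo 0 astar)
    (hA : {a : ℝ | 0 < a ∧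
        ∃ ℓ : ℝ, 0 < ℓ ∧ Tendsto (ψ a) (𝓝[<] (1:ℝ)) (𝓝 ℓ)} = Set.Ioi asup) :
    astar = asup ∧
    {a : ℝ | 0 < a ∧
      Tendsto (fun y => ψ a y * (1-y) ^ (-p)) (𝓝[<] (1:ℝ)) (𝓝 ((p-1) ^ (-p)))} =
        {astar} := by
  have hp1 : 1 < p := hp.1
  have hκ : 0 < (p - 1) ^ (-p) := Real.rpow_pos_of_pos (by linarith) _
  have htri := fun a (ha : 0 < a) => (hf a ha).trichotomy hp ha (hrel a ha)
  have hmemC : ∀ a, 0 < a → (a < astar ↔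
      Tendsto (fun y => ψ a y * (1-y) ^ (-p)) (𝓝[<] (1:ℝ)) (𝓝 0)) := fun a ha => by
    have := Set.ext_iff.1 hC a
    simp only [mem_ofPred_eq, mem_Ioo, ha, true_and] at this
    exact this.symm
  have hmemA : ∀ a, 0 < a → (asup < a ↔
      ∃ ℓ : ℝ, 0 < ℓ ∧ Tendsto (ψ a) (𝓝[<] (1:ℝ)) (𝓝 ℓ)) := fun a ha => by
    have := Set.ext_iff.1 hA a
    simp only [mem_ofPred_eq, mem_Ioi, ha, true_and] at this
    exact this.symm
  -- By the trichotomy, the fast-decay set is exactly `[a_*, a^*]`.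
  have hmemB : ∀ a, 0 < a → ((astar ≤ a ∧ a ≤ asup) ↔
      Tendsto (fun y => ψ a y * (1-y) ^ (-p)) (𝓝[<] (1:ℝ)) (𝓝 ((p-1) ^ (-p)))) := by
    intro a ha
    constructor
    · rintro ⟨h1, h2⟩
      rcases htri a ha with h | h | h
      · exact absurd ((hmemA a ha).2 h) (not_lt.2 h2)
      · exact h.1
      · exact absurd ((hmemC a ha).2 h) (not_lt.2 h1)
    · intro h
      constructor
      · by_contra! h1
        exact hκ.ne (tendsto_nhds_unique ((hmemC a ha).1 h1) h)
      · by_contra! h1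
        obtain ⟨ℓ, hℓ, ht⟩ := (hmemA a ha).1 h1
        exact not_tendsto_pos (by linarith) hℓ ht h
  have hprof : ∀ a, 0 < a → astar ≤ a → a ≤ asup →
      ∃ Φ, FastProfile (p - 1)⁻¹ (a ^ (2 - p)) Φ := by
    intro a ha h1 h2
    rcases htri a ha with h | h | h
    · exact absurd ((hmemA a ha).2 h) (not_lt.2 h2)
    · exact h.2
    · exact absurd ((hmemC a ha).2 h) (not_lt.2 h1)
  have hle : astar ≤ asup := by
    by_contra! hlt
    obtain ⟨a, h1, h2⟩ := exists_between hlt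
    have ha : 0 < a := hsup.trans h1
    obtain ⟨ℓ, hℓ, ht⟩ := (hmemA a ha).1 h1
    exact not_tendsto_pos (by linarith) hℓ ht ((hmemC a ha).1 h2)
  have heq : astar = asup := by
    refine hle.antisymm (not_lt.1 fun hlt => ?_)
    obtain ⟨Φ₁, h₁⟩ := hprof astar hstar le_rfl hle
    obtain ⟨Φ₂, h₂⟩ := hprof asup hsup hle le_rfl
    exact h₁.not_lt h₂ ((one_lt_inv₀ (by linarith)).2 (by linarith [hp.2]))
      (Real.rpow_lt_rpow hstar.le hlt (by linarith [hp.2]))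
  refine ⟨heq, ?_⟩
  ext a
  simp only [mem_ofPred_eq, mem_singleton_iff]
  constructor
  · rintro ⟨ha, h⟩
    obtain ⟨h1, h2⟩ := (hmemB a ha).2 h
    exact (h2.trans heq.ge).antisymm h1
  · rintro rfl
    exact ⟨hstar, (hmemB a hstar).1 ⟨le_rfl, hle⟩⟩
end
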